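/- If the edge-probability function p = p(n) satisfies n·p(n) − ln n − ln ln n → ∞ and p(n) ≤ 1.02·ln n / n, then with high probability a graph G sampled from G(n,p) satisfies r_ℓ(G, Hamiltonicity) = δ(G) − 1, where δ(G) is the minimum degree of G. Equivalently, w.h.p. deleting from G the edges of any spanning subgraph of maximum degree at most δ(G) − 2 leaves a Hamiltonian graph, while deleting a suitable subgraph of maximum degree δ(G) − 1 destroys Hamiltonicity. -/

import Mathlib

open Filter Finset SimpleGraph
open scoped Classical

/-- The probability weight of a particular graph `G` on `[n]` under `G(n,p)`. -/
noncomputable def gnpWeight (n : ℕ) (p : ℝ) (G : SimpleGraph (Fin n)) : ℝ :=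
  p ^ G.edgeFinset.card * (1 - p) ^ (n.choose 2 - G.edgeFinset.card)

/-- The probability that a random graph `G ~ G(n,p)` satisfies the predicate `A`. -/
noncomputable def gnpProb (n : ℕ) (p : ℝ) (A : SimpleGraph (Fin n) → Prop) : ℝ :=
  ∑ G : SimpleGraph (Fin n), if A G then gnpWeight n p G else 0

/-- A sequence of graph properties holds with high probability in `G(n, p n)`. -/
def WHP (p : ℕ → ℝ) (A : ∀ n : ℕ, SimpleGraph (Fin n) → Prop) : Prop :=
  Tendsto (fun n => gnpProb n (p n) (A n)) atTop (nhds 1)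

/-- Number of edges of a graph. -/
noncomputable def edgeCount {V : Type*} [Fintype V] (G : SimpleGraph V) : ℕ :=
  G.edgeFinset.card

/-- Number of edges with both endpoints in `U`. -/
noncomputable def eIn {V : Type*} [Fintype V] (G : SimpleGraph V) (U : Finset V) : ℕ :=
  (G.edgeFinset.filter (fun e => ∀ v ∈ e, v ∈ U)).card

/-- Number of edges with one endpoint in `U` and the other in `Z` (for disjoint `U`, `Z`). -/
noncomputable def eBetween {V : Type*} [Fintype V] (G : SimpleGraph V) (U Z : Finset V) : ℕ :=
  ((U ×ˢ Z).filter (fun q => G.Adj q.1 q.2)).card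

/-- External neighbourhood of a vertex set. -/
noncomputable def extNbhd {V : Type*} [Fintype V] (G : SimpleGraph V) (U : Finset V) : Finset V :=
  Finset.univ.filter (fun v => v ∉ U ∧ ∃ u ∈ U, G.Adj u v)

/-- `G` is an `(R, f)`-expander: every set `U` with `|U| ≤ R` satisfies `|N(U)| ≥ f(|U|)·|U|`. -/
def IsExpander {V : Type*} [Fintype V] (G : SimpleGraph V) (R : ℝ) (f : ℕ → ℝ) : Prop :=
  ∀ U : Finset V, U.Nonempty → (U.card : ℝ) ≤ R →
    f U.card * U.card ≤ ((extNbhd G U).card : ℝ)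

/-- The expansion function `f_β` on `{1, …, ⌊β n₁⌋}`. -/
noncomputable def fBeta (β : ℝ) (n1 : ℕ) (t : ℕ) : ℝ :=
  if t = Nat.floor (β * n1) then 2 * (1 + 39 * β) / (3 * β)
  else if (t : ℝ) < (n1 : ℝ) ^ (0.1 : ℝ) then Real.log n1 ^ (0.8 : ℝ)
  else 11

/-- `G₁` is `(n₁, d, β)`-quasi-random. -/
def QuasiRandom {V : Type*} [Fintype V] (G1 : SimpleGraph V) (n1 : ℕ) (d β : ℝ) : Prop :=
  (∀ v : V, d / 150 ≤ (G1.degree v : ℝ)) ∧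
  (∀ U : Finset V, (U.card : ℝ) < (n1 : ℝ) ^ (0.11 : ℝ) * Real.log n1 →
    (eIn G1 U : ℝ) ≤ d ^ (0.13 : ℝ) * U.card) ∧
  (∀ U : Finset V, (U.card : ℝ) < 12 * β * n1 →
    (eIn G1 U : ℝ) ≤ 50 * β * d * U.card) ∧
  (∀ U Z : Finset V, Disjoint U Z → U.card = Nat.floor (β * n1) →
    Z.card = Nat.floor ((1 / 3 - 27 * β) * n1) →
    (n1 : ℝ) * Real.log (Real.log n1) ≤ (eBetween G1 U Z : ℝ))

/-- Longest path length in `G`. -/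
noncomputable def longestPath {V : Type*} [Fintype V] (G : SimpleGraph V) : ℕ :=
  sSup {l : ℕ | ∃ (u v : V) (q : G.Walk u v), q.IsPath ∧ q.length = l}

/-- `{u, v}` is a booster with respect to `Γ`. -/
def IsBooster {V : Type*} [Fintype V] (Γ : SimpleGraph V) (u v : V) : Prop :=
  u ≠ v ∧ ¬ Γ.Adj u v ∧
    ((Γ ⊔ fromEdgeSet {s(u, v)}).IsHamiltonian ∨
      longestPath Γ < longestPath (Γ ⊔ fromEdgeSet {s(u, v)}))

/-- The booster set `B_Γ(v)`. -/
noncomputable def boosterSet {V : Type*} [Fintype V] (Γ : SimpleGraph V) (v : V) : Finset V :=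
  Finset.univ.filter (fun w => IsBooster Γ v w)

/-- Membership in the family `𝓛(n, β)` with witnessing partition `V = V₁ ∪ D`. -/
def InFamilyL (n : ℕ) (β : ℝ) (G : SimpleGraph (Fin n)) (V1 D : Finset (Fin n)) : Prop :=
  Disjoint V1 D ∧ V1 ∪ D = Finset.univ ∧
  ((D.card : ℝ) ≤ (n : ℝ) ^ (0.09 : ℝ)) ∧
  (∀ u ∈ D, 2 ≤ (G.neighborFinset u ∩ V1).card) ∧
  (∀ u ∈ D, ∀ v ∈ D, ∀ q : G.Walk u v, q.IsPath → 0 < q.length →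
    2 * Real.log n / (3 * Real.log (Real.log n)) < (q.length : ℝ)) ∧
  (∀ u ∈ D, ∀ q : G.Walk u u, q.IsCycle →
    2 * Real.log n / (3 * Real.log (Real.log n)) < (q.length : ℝ)) ∧
  IsExpander (G.induce (V1 : Set (Fin n))) (β * V1.card) (fBeta β V1.card)

/-!
Deleting all but one of the edges at a vertex of minimum degree destroys all Hamilton cycles. For
the converse, near the threshold some vertex of `G` has degree at most `0.01 ln n`, by the second
moment method. Hence a subgraph `H` of maximum degree at most `δ(G) - 2` contains few of the edges
at any vertex of large degree, and `G \ H` still has minimum degree at least `2`. As the vertices of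
low degree are far apart, it suffices to pick a few edges of `G \ H` at each vertex, and a few more
that join all pairs of large disjoint sets, to obtain a sparse spanning expander `Γ ≤ G \ H`.

By Pósa rotations, an expander that is not Hamiltonian has quadratically many boosters: edges whose
addition creates a Hamilton cycle or lengthens a longest path. The number of sparse graphs is so
small that, by a union bound, `G` contains many boosters of each of its sparse subgraphs with
quadratically many boosters. They are too many to lie all in `H`, so boosters from `G \ H` can be
added to `Γ` one at a time until a Hamilton cycle appears.
-/

/-! ### Rotations of longest paths -/

section Lists

variable {α : Type*}

lemma infix_pair_append_cons_iff {a b : List α} {x u v : α} (ha : a ≠ []) :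
    [u, v] <:+: a ++ x :: b ↔
      [u, v] <:+: a ∨ (u = a.getLast ha ∧ v = x) ∨ [u, v] <:+: x :: b := by
  induction a with
  | nil => exact absurd rfl ha
  | cons y a ih =>
    cases a with
    | nil => simp [List.infix_cons_iff, List.prefix_cons_iff]
    | cons z a =>
      rw [List.cons_append, List.infix_cons_iff, ih (by simp), List.infix_cons_iff (l₂ := z :: a),
        List.getLast_cons (List.cons_ne_nil z a)]
      simp only [List.cons_append, List.cons_prefix_cons, List.nil_prefix]
      tauto

lemma not_infix_pair_head {y u : α} {t : List α} (h : (y :: t).Nodup) :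
    ¬ [u, y] <:+: y :: t := by
  rw [List.nodup_cons] at h
  rw [List.infix_cons_iff, List.cons_prefix_cons]
  rintro (hpre | hinf)
  · exact h.1 (hpre.2.subset (by simp))
  · exact h.1 (hinf.subset (by simp))

lemma infix_pair_right_unique {l : List α} {w u v : α} (hl : l.Nodup)
    (hu : [w, u] <:+: l) (hv : [w, v] <:+: l) : u = v := by
  induction l with
  | nil => simp at hu
  | cons x l ih =>
    rw [List.nodup_cons] at hl
    have not_mem_tail {z} (hz : [w, z] <:+: l) : w ≠ x := fun h => hl.1 (h ▸ hz.subset (by simp))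
    rw [List.infix_cons_iff, List.cons_prefix_cons] at hu hv
    rcases hu with ⟨hwx, hu⟩ | hu <;> rcases hv with ⟨hwx', hv⟩ | hv
    · cases l with
      | nil => simp at hu
      | cons y l =>
        rw [List.cons_prefix_cons] at hu hv
        exact hu.1.trans hv.1.symm
    · exact absurd hwx (not_mem_tail hv)
    · exact absurd hwx' (not_mem_tail hu)
    · exact ih hl.2 hu hv

lemma infix_pair_reverse_iff {l : List α} {u v : α} : [u, v] <:+: l.reverse ↔ [v, u] <:+: l := by
  rw [← List.reverse_infix, List.reverse_reverse]
  rfl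

lemma infix_pair_left_unique {l : List α} {w u v : α} (hl : l.Nodup)
    (hu : [u, w] <:+: l) (hv : [v, w] <:+: l) : u = v :=
  infix_pair_right_unique (List.nodup_reverse.2 hl) (infix_pair_reverse_iff.2 hu)
    (infix_pair_reverse_iff.2 hv)

/-- `u` and `v` stand next to each other, in either order, on the list `l`. -/
def Consecutive (l : List α) (u v : α) : Prop := [u, v] <:+: l ∨ [v, u] <:+: l

lemma consecutive_reverse {l : List α} {u v : α} :
    Consecutive l.reverse u v ↔ Consecutive l u v := by
  rw [Consecutive, infix_pair_reverse_iff, infix_pair_reverse_iff, or_comm, Consecutive]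

lemma consecutive_append_cons {a b : List α} {x u v : α} (ha : a ≠ []) (hx : u ≠ x)
    (hlast : u ≠ a.getLast ha) :
    Consecutive (a ++ x :: b) u v ↔ Consecutive a u v ∨ Consecutive (x :: b) u v := by
  unfold Consecutive
  rw [infix_pair_append_cons_iff ha, infix_pair_append_cons_iff ha]
  tauto

end Lists

section Rotations

variable {V : Type*} {G G' : SimpleGraph V} {l₀ l : List V}

/-- A path of `G`, encoded by the list of its vertices. The empty list is allowed. -/
def IsPathList (G : SimpleGraph V) (l : List V) : Prop := l.IsChain G.Adj ∧ l.Nodup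

lemma IsPathList.mono (hG : G ≤ G') (hl : IsPathList G l) : IsPathList G' l :=
  ⟨hl.1.imp fun _ _ h => hG h, hl.2⟩

lemma IsPathList.reverse (hl : IsPathList G l) : IsPathList G l.reverse :=
  ⟨List.isChain_reverse.2 (hl.1.imp fun _ _ h => h.symm), List.nodup_reverse.2 hl.2⟩

lemma IsPathList.of_cyclic_shift {w z y x : V} {a b : List V} (h : IsPathList G (a ++ x :: b))
    (hhead : (a ++ x :: b).head? = some z) (hlast : (a ++ x :: b).getLast? = some y)
    (hadj : G.Adj y z) (hw : w ∉ a ++ x :: b) (hwx : G.Adj w x) :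
    IsPathList G (w :: (x :: b ++ a)) := by
  have hperm : (x :: b ++ a).Perm (a ++ x :: b) := List.perm_append_comm
  refine ⟨List.IsChain.cons_cons hwx ?_,
    List.nodup_cons.2 ⟨fun hm => hw (hperm.mem_iff.1 hm), hperm.nodup_iff.2 h.2⟩⟩
  have hchain := List.isChain_append.1 h.1
  refine List.isChain_append.2 ⟨hchain.2.1, hchain.1, fun u hu v hv => ?_⟩
  rw [List.getLast?_append_of_ne_nil _ (by simp)] at hlast
  rw [List.head?_append, Option.mem_def.1 hv] at hhead
  rw [Option.mem_def, hlast] at hu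
  simp_all

/-- The lists obtained from `l₀` by repeated Pósa rotations: if the first vertex `y` of a path is
adjacent to one of its vertices `x`, the segment preceding `x` may be reversed. The last vertex of
the path never moves. -/
inductive RotationReachable (G : SimpleGraph V) (l₀ : List V) : List V → Prop
  | refl : RotationReachable G l₀ l₀
  | rotate {y x : V} {a b : List V} : RotationReachable G l₀ ((y :: a) ++ x :: b) → G.Adj y x →
      RotationReachable G l₀ ((y :: a).reverse ++ x :: b)

namespace RotationReachable

lemma perm (h : RotationReachable G l₀ l) : l.Perm l₀ := by
  induction h with
  | refl => rfl
  | rotate _ _ ih => exact ((List.reverse_perm _).append_right _).trans ih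

lemma getLast?_eq (h : RotationReachable G l₀ l) : l.getLast? = l₀.getLast? := by
  induction h with
  | refl => rfl
  | rotate _ _ ih =>
    rw [← ih, List.getLast?_append_of_ne_nil _ (by simp),
      List.getLast?_append_of_ne_nil _ (by simp)]

lemma isPathList (h : RotationReachable G l₀ l) (h₀ : IsPathList G l₀) : IsPathList G l := by
  refine ⟨?_, h.perm.nodup_iff.2 h₀.2⟩
  induction h with
  | refl => exact h₀.1
  | @rotate y x a b _ hadj ih =>
    rw [List.isChain_append] at ih ⊢
    refine ⟨List.isChain_reverse.2 (ih.1.imp fun _ _ h => h.symm), ih.2.1, ?_⟩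
    simpa using hadj

end RotationReachable

lemma bddAbove_path_lengths [Finite V] (G : SimpleGraph V) :
    BddAbove {k : ℕ | ∃ (u v : V) (q : G.Walk u v), q.IsPath ∧ q.length = k} := by
  have := Fintype.ofFinite V
  refine ⟨Fintype.card V, ?_⟩
  rintro k ⟨u, v, q, hq, rfl⟩
  exact hq.length_lt.le

variable [Fintype V]

/-- The possible first vertices of the lists reachable from `l₀` by rotations. -/
noncomputable def rotationEnds (G : SimpleGraph V) (l₀ : List V) : Finset V :=
  {y | ∃ t, RotationReachable G l₀ (y :: t)}

lemma mem_rotationEnds {y : V} : y ∈ rotationEnds G l₀ ↔ ∃ t, RotationReachable G l₀ (y :: t) := by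
  simp [rotationEnds]

lemma RotationReachable.getLast_mem_rotationEnds {y x : V} {a b : List V}
    (h : RotationReachable G l₀ ((y :: a) ++ x :: b)) (hadj : G.Adj y x) :
    (y :: a).getLast (by simp) ∈ rotationEnds G l₀ := by
  obtain ⟨z, c, hzc⟩ : ∃ z c, (y :: a).reverse = z :: c := List.exists_cons_of_ne_nil (by simp)
  have hlast : (y :: a).getLast (by simp) = z := by
    simp [show y :: a = (z :: c).reverse by rw [← hzc, List.reverse_reverse]]
  have hrot := h.rotate hadj
  rw [hzc] at hrot
  exact hlast ▸ mem_rotationEnds.2 ⟨_, hrot⟩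

/-- A rotation only breaks up a pair containing a new end, so the neighbours on the path of a
vertex away from all ends never change. -/
lemma RotationReachable.consecutive_iff {u : V} (h : RotationReachable G l₀ l)
    (hu : u ∉ rotationEnds G l₀) (hcons : ∀ w ∈ rotationEnds G l₀, ¬ Consecutive l₀ u w) (v : V) :
    Consecutive l u v ↔ Consecutive l₀ u v := by
  induction h generalizing v with
  | refl => rfl
  | @rotate y x a b hr hadj ih =>
    have hend := hr.getLast_mem_rotationEnds hadj
    have hux : u ≠ x := by
      rintro rfl
      refine hcons _ hend ((ih _).1 (Or.inr ?_))
      exact (infix_pair_append_cons_iff (by simp)).2 (Or.inr (Or.inl ⟨rfl, rfl⟩))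
    have huy : u ≠ y := by
      rintro rfl
      exact hu (mem_rotationEnds.2 ⟨_, hr⟩)
    have hlast : u ≠ (y :: a).getLast (by simp) := fun h => hu (h ▸ hend)
    rw [← ih v, consecutive_append_cons (by simp) hux (by simpa using huy),
      consecutive_append_cons (by simp) hux hlast, consecutive_reverse]

lemma mem_extNbhd {U : Finset V} {v : V} : v ∈ extNbhd G U ↔ v ∉ U ∧ ∃ u ∈ U, G.Adj u v := by
  simp [extNbhd]

lemma IsPathList.length_le (hl : IsPathList G l) : l.length ≤ longestPath G + 1 := by
  rcases eq_or_ne l [] with rfl | hne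
  · simp
  · have hpath : (Walk.ofSupport l hne hl.1).IsPath :=
      Walk.IsPath.mk' (by rw [Walk.support_ofSupport]; exact hl.2)
    have := le_csSup (bddAbove_path_lengths G) ⟨_, _, _, hpath, Walk.length_ofSupport _ _⟩
    unfold longestPath
    omega

lemma exists_isPathList_length_eq [Nonempty V] (G : SimpleGraph V) :
    ∃ l, IsPathList G l ∧ l.length = longestPath G + 1 := by
  inhabit V
  have hnonempty : {k : ℕ | ∃ (u v : V) (q : G.Walk u v), q.IsPath ∧ q.length = k}.Nonempty :=
    ⟨0, default, default, Walk.nil, Walk.IsPath.nil, rfl⟩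
  obtain ⟨u, v, q, hq, hlen⟩ := Nat.sSup_mem hnonempty (bddAbove_path_lengths G)
  exact ⟨q.support, ⟨q.isChain_adj_support, hq.support_nodup⟩, by
    rw [Walk.length_support, hlen, longestPath]⟩

lemma longestPath_lt_card [Nonempty V] (G : SimpleGraph V) : longestPath G < Fintype.card V := by
  obtain ⟨l, hl, hlen⟩ := exists_isPathList_length_eq G
  have := hl.2.length_le_card
  omega

lemma exists_consecutive_of_mem_extNbhd_rotationEnds (h₀ : IsPathList G l₀)
    (hmax : l₀.length = longestPath G + 1) {u : V} (hu : u ∈ extNbhd G (rotationEnds G l₀)) :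
    ∃ w ∈ rotationEnds G l₀, Consecutive l₀ u w := by
  obtain ⟨hu_end, y, hy, hadj⟩ := mem_extNbhd.1 hu
  by_contra! hcons
  obtain ⟨t, ht⟩ := mem_rotationEnds.1 hy
  have hpath := ht.isPathList h₀
  have hmem : u ∈ y :: t := by
    by_contra hnot
    have hlonger : IsPathList G (u :: y :: t) :=
      ⟨List.IsChain.cons_cons hadj.symm hpath.1, List.nodup_cons.2 ⟨hnot, hpath.2⟩⟩
    have := hlonger.length_le
    have := ht.perm.length_eq
    simp_all
  have hmem_tail : u ∈ t :=
    (List.mem_cons.1 hmem).resolve_left fun h => hu_end (h ▸ hy)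
  obtain ⟨a, b, rfl⟩ := List.append_of_mem hmem_tail
  refine hcons _ (ht.getLast_mem_rotationEnds hadj)
    ((ht.consecutive_iff hu_end hcons _).1 (Or.inr ?_))
  exact (infix_pair_append_cons_iff (a := y :: a) (by simp)).2 (Or.inr (Or.inl ⟨rfl, rfl⟩))

/-- **Pósa's lemma**: every external neighbour of the rotation ends is next to one of them on the
original path. -/
theorem card_extNbhd_rotationEnds_lt {y : V} {t : List V} (hpath : IsPathList G (y :: t))
    (hmax : (y :: t).length = longestPath G + 1) :
    #(extNbhd G (rotationEnds G (y :: t))) < 2 * #(rotationEnds G (y :: t)) := by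
  set S := rotationEnds G (y :: t) with hS
  have hy : y ∈ S := mem_rotationEnds.2 ⟨t, .refl⟩
  let successors : Finset V := {u | ∃ w ∈ S, [w, u] <:+: y :: t}
  let predecessors : Finset V := {u | ∃ w ∈ S, [u, w] <:+: y :: t}
  have hcover : extNbhd G S ⊆ successors ∪ predecessors := by
    intro u hu
    obtain ⟨w, hw, h | h⟩ := exists_consecutive_of_mem_extNbhd_rotationEnds hpath hmax hu
    · exact mem_union_right _ (mem_filter.2 ⟨mem_univ _, w, hw, h⟩)
    · exact mem_union_left _ (mem_filter.2 ⟨mem_univ _, w, hw, h⟩)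
  have hsucc : #successors ≤ #S :=
    card_le_card_of_forall_subsingleton (fun u w => [w, u] <:+: y :: t)
      (fun u hu => (mem_filter.1 hu).2)
      (fun w _ u hu v hv => infix_pair_right_unique hpath.2 hu.2 hv.2)
  have hpred : #predecessors ≤ #(S.erase y) := by
    refine card_le_card_of_forall_subsingleton (fun u w => [u, w] <:+: y :: t) (fun u hu => ?_)
      (fun w _ u hu v hv => infix_pair_left_unique hpath.2 hu.2 hv.2)
    obtain ⟨w, hw, h⟩ := (mem_filter.1 hu).2
    refine ⟨w, mem_erase.2 ⟨?_, hw⟩, h⟩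
    rintro rfl
    exact not_infix_pair_head hpath.2 h
  rw [card_erase_of_mem hy] at hpred
  have := card_le_card hcover
  have := card_union_le successors predecessors
  have := card_pos.2 ⟨y, hy⟩
  omega

end Rotations

/-! ### Boosters of expanders -/

section Boosters

variable {V : Type*} [Fintype V] {G G' : SimpleGraph V} {R : ℕ}

lemma extNbhd_mono (hG : G ≤ G') (U : Finset V) : extNbhd G U ⊆ extNbhd G' U := fun _ hv =>
  let ⟨hvU, u, hu, hadj⟩ := mem_extNbhd.1 hv
  mem_extNbhd.2 ⟨hvU, u, hu, hG hadj⟩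

lemma isExpander_two_iff :
    IsExpander G R (fun _ => 2) ↔ ∀ U : Finset V, #U ≤ R → 2 * #U ≤ #(extNbhd G U) := by
  refine ⟨fun h U hU => ?_, fun h U _ hU => ?_⟩
  · rcases U.eq_empty_or_nonempty with rfl | hne
    · simp
    · have hexp : (2 : ℝ) * #U ≤ #(extNbhd G U) := h U hne (by exact_mod_cast hU)
      exact_mod_cast hexp
  · change (2 : ℝ) * #U ≤ #(extNbhd G U)
    exact_mod_cast h U (by exact_mod_cast hU)

lemma IsExpander.mono {r : ℝ} {f : ℕ → ℝ} (hG : G ≤ G') (h : IsExpander G r f) :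
    IsExpander G' r f := fun U hne hU =>
  (h U hne hU).trans (by exact_mod_cast card_le_card (extNbhd_mono hG U))

lemma exists_adj_notMem_of_two_mul_card_le (hG : IsExpander G R (fun _ => 2))
    (hR : Fintype.card V < 6 * R) {A : Finset V} (hA : A.Nonempty)
    (hcard : 2 * #A ≤ Fintype.card V) : ∃ x ∈ A, ∃ w ∉ A, G.Adj x w := by
  by_contra! hclosed
  have hsub (U : Finset V) (hU : U ⊆ A) : extNbhd G U ⊆ A \ U := by
    intro v hv
    obtain ⟨hvU, u, hu, hadj⟩ := mem_extNbhd.1 hv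
    exact mem_sdiff.2 ⟨by_contra fun hvA => hclosed u (hU hu) v hvA hadj, hvU⟩
  -- Test the expansion on `A` itself if it is small, and on an `R`-subset of `A` otherwise.
  obtain ⟨U, hUA, hU⟩ := exists_subset_card_eq (min_le_right R #A)
  have hexp := isExpander_two_iff.1 hG U (by omega)
  have hle := card_le_card (hsub U hUA)
  rw [card_sdiff_of_subset hUA] at hle
  have := hA.card_pos
  omega

lemma exists_adj_notMem (hG : IsExpander G R (fun _ => 2)) (hR : Fintype.card V < 6 * R)
    {A : Finset V} (hA : A.Nonempty) {w : V} (hw : w ∉ A) : ∃ x ∈ A, ∃ w ∉ A, G.Adj x w := by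
  rcases le_total (2 * #A) (Fintype.card V) with hcard | hcard
  · exact exists_adj_notMem_of_two_mul_card_le hG hR hA hcard
  · obtain ⟨x, hx, v, hv, hadj⟩ := exists_adj_notMem_of_two_mul_card_le hG hR (A := Aᶜ)
      ⟨w, mem_compl.2 hw⟩ (by rw [card_compl]; omega)
    exact ⟨v, by simpa using hv, x, mem_compl.1 hx, hadj.symm⟩

lemma IsPathList.isHamiltonian {z y : V} {t : List V} (h : IsPathList G (z :: t))
    (hlen : 3 ≤ (z :: t).length) (hlast : (z :: t).getLast? = some y) (hadj : G.Adj y z)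
    (hall : ∀ w, w ∈ z :: t) : G.IsHamiltonian := by
  intro _
  have hy : (z :: t).getLast (by simp) = y := by
    rw [List.getLast?_eq_some_getLast (by simp)] at hlast
    exact Option.some.inj hlast
  let p := Walk.ofSupport (z :: t) (by simp) h.1
  have hp : p.IsPath := Walk.IsPath.mk' (by rw [Walk.support_ofSupport]; exact h.2)
  have hplen : p.length = (z :: t).length - 1 := Walk.length_ofSupport _ _
  have hclose : G.Adj ((z :: t).getLast (by simp)) ((z :: t).head (by simp)) := hy ▸ hadj
  refine ⟨_, Walk.cons hclose p, Walk.isHamiltonianCycle_iff_isCycle_and_length_eq.2 ⟨?_, ?_⟩⟩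
  · refine (Walk.cons_isCycle_iff _ _).2 ⟨hp, fun hmem => ?_⟩
    rw [Sym2.eq_swap] at hmem
    have := hp.length_eq_one_of_mem_edges hmem
    omega
  · have hcard := List.toFinset_card_of_nodup h.2
    rw [show (z :: t).toFinset = univ by ext w; simpa using hall w, card_univ] at hcard
    rw [Walk.length_cons, hplen, hcard]
    omega

/-- A path closed up to a cycle is Hamiltonian or, by connectivity, can be opened up at a vertex
with a neighbour off the cycle. -/
lemma isHamiltonian_or_length_le_longestPath (hG : IsExpander G R (fun _ => 2))
    (hR : Fintype.card V < 6 * R) {z y : V} {t : List V} (h : IsPathList G (z :: t))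
    (hlen : 3 ≤ (z :: t).length) (hlast : (z :: t).getLast? = some y) (hadj : G.Adj y z) :
    G.IsHamiltonian ∨ (z :: t).length ≤ longestPath G := by
  by_cases hall : ∀ w, w ∈ z :: t
  · exact Or.inl (h.isHamiltonian hlen hlast hadj hall)
  push Not at hall
  obtain ⟨w, hw⟩ := hall
  obtain ⟨x, hx, w', hw', hxw⟩ := exists_adj_notMem hG hR (A := (z :: t).toFinset) ⟨z, by simp⟩
    (w := w) (by simpa using hw)
  rw [List.mem_toFinset] at hx hw'
  obtain ⟨a, b, hab⟩ := List.append_of_mem hx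
  have hhead : (z :: t).head? = some z := rfl
  rw [hab] at h hw' hlast hhead
  have hlonger := (h.of_cyclic_shift hhead hlast hadj hw' hxw.symm).length_le
  right
  rw [hab]
  simp only [List.length_cons, List.length_append] at hlonger ⊢
  omega

lemma lt_card_rotationEnds (hG : IsExpander G R (fun _ => 2)) {y : V} {t : List V}
    (h : IsPathList G (y :: t)) (hmax : (y :: t).length = longestPath G + 1) :
    R < #(rotationEnds G (y :: t)) := by
  by_contra! hle
  have := isExpander_two_iff.1 hG _ hle
  have := card_extNbhd_rotationEnds_lt h hmax
  omega

lemma two_le_longestPath [Nonempty V] (hG : IsExpander G R (fun _ => 2)) (hR : 1 ≤ R) :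
    2 ≤ longestPath G := by
  obtain ⟨v⟩ := ‹Nonempty V›
  have hexp := isExpander_two_iff.1 hG {v} (by simpa using hR)
  rw [card_singleton, mul_one] at hexp
  obtain ⟨a, b, ha, hb, hab⟩ := one_lt_card_iff.1 (show 1 < #(extNbhd G {v}) by omega)
  simp only [mem_extNbhd, mem_singleton, exists_eq_left] at ha hb
  have hpath : IsPathList G [a, v, b] := by
    simp [IsPathList, ha.2.symm, hb.2, ha.1, hab, Ne.symm hb.1]
  have := hpath.length_le
  simp only [List.length_cons, List.length_nil] at this
  omega

lemma IsPathList.isBooster (hG : IsExpander G R (fun _ => 2)) (hR : Fintype.card V < 6 * R)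
    (hham : ¬ G.IsHamiltonian) {y z : V} {t : List V} (h : IsPathList G (z :: t))
    (hmax : (z :: t).length = longestPath G + 1) (hlen : 3 ≤ (z :: t).length)
    (hlast : (z :: t).getLast? = some y) : IsBooster G y z := by
  have hyz : y ≠ z := by
    rintro rfl
    have ht : t ≠ [] := by rintro rfl; simp at hlen
    rw [List.getLast?_cons_of_ne_nil ht] at hlast
    exact (List.nodup_cons.1 h.2).1 (List.mem_of_getLast? hlast)
  refine ⟨hyz, fun hadj => ?_, ?_⟩
  · rcases isHamiltonian_or_length_le_longestPath hG hR h hlen hlast hadj with hH | hle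
    · exact hham hH
    · omega
  · have hadj : (G ⊔ fromEdgeSet {s(y, z)}).Adj y z := Or.inr (by simp [hyz])
    refine (isHamiltonian_or_length_le_longestPath (hG.mono le_sup_left) hR (h.mono le_sup_left)
      hlen hlast hadj).imp_right fun hle => ?_
    omega

lemma lt_card_boosterSet [Nonempty V] (hG : IsExpander G R (fun _ => 2))
    (hR : Fintype.card V < 6 * R) (hham : ¬ G.IsHamiltonian) {y : V} {t : List V}
    (h : IsPathList G (y :: t)) (hmax : (y :: t).length = longestPath G + 1) :
    R < #(boosterSet G y) := by
  obtain ⟨z, s, hzs⟩ := List.exists_cons_of_ne_nil (l := (y :: t).reverse) (by simp)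
  have hlast : (z :: s).getLast? = some y := by simp [← hzs]
  have hmax' : (z :: s).length = longestPath G + 1 := by rw [← hzs, List.length_reverse, hmax]
  have hpath : IsPathList G (z :: s) := hzs ▸ h.reverse
  have htwo := two_le_longestPath hG (by have := Fintype.card_pos (α := V); omega)
  refine (lt_card_rotationEnds hG hpath hmax').trans_le (card_le_card fun x hx => ?_)
  obtain ⟨r, hr⟩ := mem_rotationEnds.1 hx
  have hrlen := hr.perm.length_eq.trans hmax'
  exact mem_filter.2 ⟨mem_univ _, (hr.isPathList hpath).isBooster hG hR hham hrlen
    (by omega) (hr.getLast?_eq.trans hlast)⟩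

lemma IsBooster.symm {u v : V} (h : IsBooster G u v) : IsBooster G v u := by
  unfold IsBooster
  rw [Sym2.eq_swap]
  exact ⟨h.1.symm, fun hadj => h.2.1 hadj.symm, h.2.2⟩

/-- The graph whose edges are the boosters of `G`. -/
def boosterGraph (G : SimpleGraph V) : SimpleGraph V where
  Adj := IsBooster G
  symm := ⟨fun _ _ h => h.symm⟩
  loopless := ⟨fun _ h => h.1 rfl⟩

lemma disjoint_boosterGraph (G : SimpleGraph V) : Disjoint G (boosterGraph G) :=
  SimpleGraph.disjoint_left.2 fun _ _ hadj hb => hb.2.1 hadj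

theorem sq_le_two_mul_card_boosterGraph_edgeFinset [Nonempty V]
    (hG : IsExpander G R (fun _ => 2)) (hR : Fintype.card V < 6 * R) (hham : ¬ G.IsHamiltonian) :
    (R + 1) ^ 2 ≤ 2 * #(boosterGraph G).edgeFinset := by
  obtain ⟨l, hl, hmax⟩ := exists_isPathList_length_eq G
  obtain ⟨y, t, rfl⟩ := List.exists_cons_of_ne_nil (l := l) (by rintro rfl; simp at hmax)
  let S := rotationEnds G (y :: t)
  have hdeg : ∀ v ∈ S, R + 1 ≤ (boosterGraph G).degree v := by
    intro v hv
    obtain ⟨r, hr⟩ := mem_rotationEnds.1 hv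
    have hlt := lt_card_boosterSet hG hR hham (hr.isPathList hl) (hr.perm.length_eq.trans hmax)
    refine hlt.trans_le (card_le_card fun x hx => ?_)
    exact (mem_neighborFinset _ _ _).2 (mem_filter.1 hx).2
  calc (R + 1) ^ 2 = (R + 1) * (R + 1) := sq _
    _ ≤ #S * (R + 1) := Nat.mul_le_mul_right _ (lt_card_rotationEnds hG hl hmax)
    _ ≤ ∑ v ∈ S, (boosterGraph G).degree v := card_nsmul_le_sum S _ _ hdeg
    _ ≤ ∑ v, (boosterGraph G).degree v := sum_le_sum_of_subset (subset_univ S)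
    _ = 2 * #(boosterGraph G).edgeFinset := sum_degrees_eq_twice_card_edges _

lemma exists_supergraph_isHamiltonian_or_le_longestPath (hle : G ≤ G')
    (hboost : ∀ Γ, G ≤ Γ → Γ ≤ G' → #Γ.edgeFinset ≤ #G.edgeFinset + Fintype.card V →
      ¬ Γ.IsHamiltonian → ∃ u v, IsBooster Γ u v ∧ G'.Adj u v)
    {k : ℕ} (hk : k ≤ Fintype.card V) :
    ∃ Γ, G ≤ Γ ∧ Γ ≤ G' ∧ #Γ.edgeFinset ≤ #G.edgeFinset + k ∧
      (Γ.IsHamiltonian ∨ k ≤ longestPath Γ) := by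
  induction k with
  | zero => exact ⟨G, le_rfl, hle, le_rfl, Or.inr (Nat.zero_le _)⟩
  | succ k ih =>
    obtain ⟨Γ, hGΓ, hΓG', hcard, hΓ⟩ := ih (by omega)
    by_cases hham : Γ.IsHamiltonian
    · exact ⟨Γ, hGΓ, hΓG', by omega, Or.inl hham⟩
    obtain ⟨u, v, ⟨hne, hnadj, himp⟩, hadj⟩ := hboost Γ hGΓ hΓG' (by omega) hham
    refine ⟨Γ ⊔ edge u v, hGΓ.trans le_sup_left, sup_le hΓG' ?_, ?_, himp.imp_right fun h => ?_⟩
    · exact (edge_le_iff _).2 (Or.inr hadj)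
    · refine (le_of_eq ?_).trans (Nat.add_le_add_right hcard 1)
      convert Γ.card_edgeFinset_sup_edge hnadj hne
    · have := hΓ.resolve_left hham
      exact Nat.succ_le_of_lt (this.trans_lt h)

theorem isHamiltonian_of_forall_exists_isBooster [Nonempty V] (hle : G ≤ G')
    (hboost : ∀ Γ, G ≤ Γ → Γ ≤ G' → #Γ.edgeFinset ≤ #G.edgeFinset + Fintype.card V →
      ¬ Γ.IsHamiltonian → ∃ u v, IsBooster Γ u v ∧ G'.Adj u v) : G'.IsHamiltonian := by
  obtain ⟨Γ, _, hΓ, _, hham | hlong⟩ :=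
    exists_supergraph_isHamiltonian_or_le_longestPath hle hboost le_rfl
  · exact hham.mono hΓ
  · exact absurd (longestPath_lt_card Γ) hlong.not_gt

end Boosters

/-! ### Typical graphs -/

section EdgeSets

variable {V : Type*}

/-- The unordered pairs of distinct elements of `S`. -/
noncomputable def pairsIn (S : Finset V) : Finset (Sym2 V) := S.offDiag.image fun x => s(x.1, x.2)

/-- The unordered pairs with one element in `U` and the other one in `W`. -/
noncomputable def pairsBetween (U W : Finset V) : Finset (Sym2 V) :=
  (U ×ˢ W).image fun x => s(x.1, x.2)

lemma mk_mem_pairsIn {S : Finset V} {a b : V} : s(a, b) ∈ pairsIn S ↔ a ≠ b ∧ a ∈ S ∧ b ∈ S := by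
  simp only [pairsIn, mem_image, mem_offDiag, Prod.exists, Sym2.eq_iff]
  grind

lemma injOn_mk_product {U W : Finset V} (h : Disjoint U W) :
    Set.InjOn (fun x : V × V => s(x.1, x.2)) (U ×ˢ W : Finset (V × V)) := by
  rintro ⟨a, b⟩ hab ⟨c, d⟩ hcd hx
  simp only [coe_product, Set.mem_prod, mem_coe] at hab hcd
  rcases Sym2.eq_iff.1 hx with ⟨rfl, rfl⟩ | ⟨rfl, rfl⟩
  · rfl
  · exact absurd hcd.2 (Finset.disjoint_left.1 h hab.1)

lemma exists_walk_of_adj_near {G : SimpleGraph V} {v w d : V} (hvw : G.Adj v w)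
    (hwd : w = d ∨ G.Adj d w) : ∃ q : G.Walk v d, q.length ≤ 2 := by
  rcases hwd with rfl | hdw
  · exact ⟨.cons hvw .nil, by simp⟩
  · exact ⟨.cons hvw (.cons hdw.symm .nil), by simp⟩

variable [Fintype V]

lemma eIn_eq_card_inter (G : SimpleGraph V) (S : Finset V) :
    eIn G S = #(G.edgeFinset ∩ pairsIn S) := by
  rw [eIn, ← filter_mem_eq_inter]
  congr 1
  refine filter_congr fun e he => ?_
  induction e with | _ a b =>
  have : a ≠ b := (mem_edgeFinset.1 he).ne
  grind [mk_mem_pairsIn]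

lemma eBetween_eq_card_inter (G : SimpleGraph V) {U W : Finset V} (h : Disjoint U W) :
    eBetween G U W = #(G.edgeFinset ∩ pairsBetween U W) := by
  rw [eBetween, ← card_image_of_injOn ((injOn_mk_product h).mono (filter_subset _ _)), pairsBetween,
    inter_comm, ← filter_mem_eq_inter, filter_image]
  simp only [mem_edgeFinset, mem_edgeSet]

lemma eBetween_eq_sum (G : SimpleGraph V) (U W : Finset V) :
    eBetween G U W = ∑ u ∈ U, #{w ∈ W | G.Adj u w} := by
  simp only [eBetween, card_filter, sum_product]

lemma eBetween_le_sum_degree (G : SimpleGraph V) (U W : Finset V) :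
    eBetween G U W ≤ ∑ u ∈ U, G.degree u := by
  rw [eBetween_eq_sum]
  refine sum_le_sum fun u _ => ?_
  rw [← card_neighborFinset_eq_degree]
  exact card_le_card fun w hw => (mem_neighborFinset _ _ _).2 (mem_filter.1 hw).2

lemma eBetween_le_add_sum_degree_sub {G G' : SimpleGraph V} (hle : G' ≤ G) (U W : Finset V) :
    eBetween G U W ≤ eBetween G' U W + ∑ u ∈ U, (G.degree u - G'.degree u) := by
  simp only [eBetween_eq_sum, ← sum_add_distrib]
  refine sum_le_sum fun u _ => ?_
  have hsub : G'.neighborFinset u ⊆ G.neighborFinset u := fun w hw => by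
    rw [mem_neighborFinset] at hw ⊢
    exact hle hw
  rw [← card_neighborFinset_eq_degree, ← card_neighborFinset_eq_degree,
    ← card_sdiff_of_subset hsub]
  refine (card_le_card fun w hw => ?_).trans (card_union_le _ _)
  simp only [mem_union, mem_filter, Finset.mem_sdiff, mem_neighborFinset] at hw ⊢
  tauto

lemma degree_le_degree_add_degree {G G₁ G₂ : SimpleGraph V} (h : G ≤ G₁ ⊔ G₂) (v : V) :
    G.degree v ≤ G₁.degree v + G₂.degree v := by
  simp only [← card_neighborFinset_eq_degree]
  refine (card_le_card fun w hw => ?_).trans (card_union_le _ _)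
  simp only [mem_union, mem_neighborFinset] at hw ⊢
  exact h hw

lemma card_edgeFinset_le_add {G G₁ G₂ : SimpleGraph V} (h : G ≤ G₁ ⊔ G₂) :
    #G.edgeFinset ≤ #G₁.edgeFinset + #G₂.edgeFinset := by
  refine (card_le_card fun e he => ?_).trans (card_union_le _ _)
  induction e with | _ a b =>
  simp only [mem_union, mem_edgeFinset, mem_edgeSet] at he ⊢
  exact h he

lemma two_mul_card_edgeFinset_le_add {G G' : SimpleGraph V} {d : ℝ}
    (h : ∀ v, (G.degree v : ℝ) ≤ G'.degree v + d) :
    2 * (#G.edgeFinset : ℝ) ≤ 2 * #G'.edgeFinset + Fintype.card V * d := by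
  have hsum (Γ : SimpleGraph V) : 2 * (#Γ.edgeFinset : ℝ) = ∑ v, (Γ.degree v : ℝ) := by
    exact_mod_cast Γ.sum_degrees_eq_twice_card_edges.symm
  calc 2 * (#G.edgeFinset : ℝ) ≤ ∑ v, (G'.degree v + d) := hsum G ▸ sum_le_sum fun v _ => h v
    _ = _ := by rw [sum_add_distrib, hsum, sum_const, nsmul_eq_mul, card_univ]

lemma card_support_le_eIn_add_one {G : SimpleGraph V} {u v : V} (q : G.Walk u v) :
    #q.support.toFinset ≤ eIn G q.support.toFinset + 1 := by
  induction q with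
  | nil => simp
  | @cons u v w h q ih =>
    rw [Walk.support_cons, List.toFinset_cons]
    by_cases hu : u ∈ q.support.toFinset
    · rwa [insert_eq_self.2 hu]
    have hnew : s(u, v) ∉ G.edgeFinset.filter fun e => ∀ x ∈ e, x ∈ q.support.toFinset := fun he =>
      hu ((mem_filter.1 he).2 u (Sym2.mem_mk_left _ _))
    have hlt : eIn G q.support.toFinset + 1 ≤ eIn G (insert u q.support.toFinset) := by
      rw [eIn, eIn, ← card_insert_of_notMem hnew]
      refine card_le_card fun e he => ?_
      rcases mem_insert.1 he with rfl | he
      · simp [h]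
      · rw [mem_filter] at he ⊢
        exact ⟨he.1, fun x hx => mem_insert_of_mem (he.2 x hx)⟩
    rw [card_insert_of_notMem hu]
    omega

end EdgeSets

section Typical

variable {V : Type*} [Fintype V] {G G' Γ : SimpleGraph V} {L σ : ℝ}

/-- Sets of at most `σ n` vertices have small average degree. -/
def SmallSetsSparse (G : SimpleGraph V) (L σ : ℝ) : Prop :=
  ∀ S : Finset V, S.Nonempty → (#S : ℝ) ≤ σ * Fintype.card V → (eIn G S : ℝ) < L * #S / 16000

/-- Five vertices span at most five edges. -/
def FiveSetsSparse (G : SimpleGraph V) : Prop := ∀ S : Finset V, #S = 5 → eIn G S ≤ 5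

/-- Vertices of degree less than `0.1 L` are far apart: no set of at most five vertices with at
least as many edges as a spanning tree contains two of them. -/
def LowDegreesScattered (G : SimpleGraph V) (L : ℝ) : Prop :=
  ∀ S : Finset V, #S ≤ 5 → ∀ x ∈ S, ∀ y ∈ S, x ≠ y → #S ≤ eIn G S + 1 →
    0.1 * L ≤ G.degree x ∨ 0.1 * L ≤ G.degree y

/-- There are many edges between any two disjoint sets with at least `σ n / 4` and `n / 4`
vertices. -/
def LargePairsDense (G : SimpleGraph V) (L σ : ℝ) : Prop :=
  ∀ U W : Finset V, Disjoint U W → σ / 4 * Fintype.card V ≤ #U → (Fintype.card V : ℝ) / 4 ≤ #W →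
    (#U : ℝ) * L / 16 ≤ eBetween G U W

/-- `G` contains many boosters of each of its sparse subgraphs that have quadratically many
boosters. -/
def BoosterRich (G : SimpleGraph V) (L : ℝ) : Prop :=
  ∀ Γ ≤ G, (#Γ.edgeFinset : ℝ) ≤ 0.001 * Fintype.card V * L →
    (Fintype.card V : ℝ) ^ 2 / 32 ≤ #(boosterGraph Γ).edgeFinset →
    0.005 * Fintype.card V * L < #(G.edgeFinset ∩ (boosterGraph Γ).edgeFinset)

/-- The properties of a random graph near the Hamiltonicity threshold that determine its local
resilience. The parameter `L` stands for `ln n`. -/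
structure IsTypical (G : SimpleGraph V) (L σ : ℝ) : Prop where
  two_le_degree : ∀ v, 2 ≤ G.degree v
  exists_degree_le : ∃ v, (G.degree v : ℝ) ≤ 0.01 * L
  smallSetsSparse : SmallSetsSparse G L σ
  fiveSetsSparse : FiveSetsSparse G
  lowDegreesScattered : LowDegreesScattered G L
  largePairsDense : LargePairsDense G L σ
  card_edgeFinset_le : (#G.edgeFinset : ℝ) ≤ Fintype.card V * L
  boosterRich : BoosterRich G L

lemma FiveSetsSparse.card_common_neighbors_le (hG : FiveSetsSparse G) {a b : V} (hab : a ≠ b) :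
    #{x | G.Adj a x ∧ G.Adj b x} ≤ 2 := by
  by_contra! hc
  obtain ⟨x, y, z, hx, hy, hz, hxy, hxz, hyz⟩ := Finset.two_lt_card_iff.1 hc
  simp only [mem_filter, mem_univ, true_and] at hx hy hz
  have := hx.1.ne; have := hx.2.ne
  have := hy.1.ne; have := hy.2.ne
  have := hz.1.ne; have := hz.2.ne
  have hfive : #{a, b, x, y, z} = 5 := by grind
  have hsix : #{s(a, x), s(a, y), s(a, z), s(b, x), s(b, y), s(b, z)} = 6 := by
    grind [Sym2.eq_iff]
  have hsub : ({s(a, x), s(a, y), s(a, z), s(b, x), s(b, y), s(b, z)} : Finset (Sym2 V)) ⊆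
      G.edgeFinset.filter fun e => ∀ v ∈ e, v ∈ ({a, b, x, y, z} : Finset V) := by
    simp [insert_subset_iff, hx, hy, hz]
  have hle : 6 ≤ eIn G {a, b, x, y, z} := hsix ▸ card_le_card hsub
  have := hG _ hfive
  omega

/-- The vertices of degree less than `0.1 L`. -/
noncomputable def lowDegree (G : SimpleGraph V) (L : ℝ) : Finset V := {v | G.degree v < 0.1 * L}

/-- The vertices at distance at most one from a vertex of low degree. -/
noncomputable def nearLowDegree (G : SimpleGraph V) (L : ℝ) : Finset V :=
  {w | ∃ d ∈ lowDegree G L, w = d ∨ G.Adj d w}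

lemma mem_lowDegree {v : V} : v ∈ lowDegree G L ↔ (G.degree v : ℝ) < 0.1 * L := by
  simp [lowDegree]

lemma mem_nearLowDegree {w : V} :
    w ∈ nearLowDegree G L ↔ ∃ d ∈ lowDegree G L, w = d ∨ G.Adj d w := by
  simp [nearLowDegree]

lemma LowDegreesScattered.eq_of_walk (hG : LowDegreesScattered G L) {u v : V}
    (hu : u ∈ lowDegree G L) (hv : v ∈ lowDegree G L) (q : G.Walk u v) (hq : q.length ≤ 4) :
    u = v := by
  rw [mem_lowDegree] at hu hv
  by_contra huv
  have hcard : #q.support.toFinset ≤ 5 :=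
    (List.toFinset_card_le _).trans (by rw [Walk.length_support]; omega)
  rcases hG q.support.toFinset hcard u (List.mem_toFinset.2 q.start_mem_support) v
    (List.mem_toFinset.2 q.end_mem_support) huv (card_support_le_eIn_add_one q) with h | h <;>
    linarith

lemma card_neighbors_nearLowDegree_le (hlow : LowDegreesScattered G L) (hfive : FiveSetsSparse G)
    {v : V} (hv : v ∉ lowDegree G L) : #{w | G.Adj v w ∧ w ∈ nearLowDegree G L} ≤ 3 := by
  rcases (filter (fun w => G.Adj v w ∧ w ∈ nearLowDegree G L) univ).eq_empty_or_nonempty with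
    h | ⟨w, hw⟩
  · simp [h]
  simp only [mem_filter, mem_univ, true_and, mem_nearLowDegree] at hw
  obtain ⟨hvw, d, hd, hwd⟩ := hw
  have hvd : v ≠ d := fun h => hv (h ▸ hd)
  have hsub : ({w | G.Adj v w ∧ w ∈ nearLowDegree G L} : Finset V) ⊆
      insert d (filter (fun x => G.Adj v x ∧ G.Adj d x) univ) := by
    intro w' hw'
    simp only [mem_filter, mem_univ, true_and, mem_nearLowDegree] at hw'
    obtain ⟨hvw', d', hd', hwd'⟩ := hw'
    obtain ⟨q, hq⟩ := exists_walk_of_adj_near hvw hwd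
    obtain ⟨q', hq'⟩ := exists_walk_of_adj_near hvw' hwd'
    obtain rfl : d = d' := hlow.eq_of_walk hd hd' (q.reverse.append q')
      (by rw [Walk.length_append, Walk.length_reverse]; omega)
    simpa [hvw'] using hwd'
  calc _ ≤ _ := card_le_card hsub
    _ ≤ _ := card_insert_le _ _
    _ ≤ 3 := by have := hfive.card_common_neighbors_le hvd; omega

/-- A choice of neighbours in `G'` of each vertex: two for the vertices that have low degree in
`G`, and `K` for the others, none of which is close to a vertex of low degree. -/
structure IsSelection (G G' : SimpleGraph V) (L : ℝ) (K : ℕ) (pick : V → Finset V) : Prop where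
  adj : ∀ {v w}, w ∈ pick v → G'.Adj v w
  card_eq : ∀ {v}, v ∉ lowDegree G L → #(pick v) = K
  notMem_nearLowDegree : ∀ {v w}, v ∉ lowDegree G L → w ∈ pick v → w ∉ nearLowDegree G L
  card_eq_two : ∀ {v}, v ∈ lowDegree G L → #(pick v) = 2

lemma exists_isSelection (hlow : LowDegreesScattered G L) (hfive : FiveSetsSparse G) (hle : G' ≤ G)
    {K : ℕ} (hK : ∀ v, v ∉ lowDegree G L → K + 3 ≤ G'.degree v) (htwo : ∀ v, 2 ≤ G'.degree v) :
    ∃ pick, IsSelection G G' L K pick := by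
  have key : ∀ v, ∃ P ⊆ G'.neighborFinset v,
      (v ∉ lowDegree G L → #P = K ∧ ∀ w ∈ P, w ∉ nearLowDegree G L) ∧
      (v ∈ lowDegree G L → #P = 2) := by
    intro v
    by_cases hv : v ∈ lowDegree G L
    · obtain ⟨P, hP, hcard⟩ := exists_subset_card_eq (s := G'.neighborFinset v) (htwo v)
      exact ⟨P, hP, fun h => absurd hv h, fun _ => hcard⟩
    have hlarge :
        K ≤ #(G'.neighborFinset v \ filter (fun w => G.Adj v w ∧ w ∈ nearLowDegree G L) univ) := by
      refine le_trans ?_ (le_card_sdiff _ _)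
      have := card_neighbors_nearLowDegree_le hlow hfive hv
      have := hK v hv
      rw [card_neighborFinset_eq_degree]
      omega
    obtain ⟨P, hP, hcard⟩ := exists_subset_card_eq hlarge
    refine ⟨P, hP.trans sdiff_subset, fun _ => ⟨hcard, fun w hw hnear => ?_⟩, fun h => absurd h hv⟩
    have hw' := hP hw
    simp only [Finset.mem_sdiff, mem_neighborFinset, mem_filter, mem_univ, true_and] at hw'
    exact hw'.2 ⟨hle hw'.1, hnear⟩
  choose pick hadj hhigh htwo using key
  exact ⟨pick, fun hw => (mem_neighborFinset _ _ _).1 (hadj _ hw), fun hv => (hhigh _ hv).1,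
    fun hv hw => (hhigh _ hv).2 _ hw, fun hv => htwo _ hv⟩

lemma sum_card_le_two_mul_card {α : Type*} {U : Finset α} {pick : α → Finset α}
    {E : Finset (Sym2 α)} (h : ∀ v ∈ U, ∀ w ∈ pick v, s(v, w) ∈ E) :
    ∑ v ∈ U, #(pick v) ≤ 2 * #E := by
  rw [← card_sigma]
  refine card_le_mul_card_image_of_maps_to (f := fun x => s(x.1, x.2))
    (fun x hx => h x.1 (mem_sigma.1 hx).1 x.2 (mem_sigma.1 hx).2) 2 fun e _ => ?_
  induction e with | _ a b =>
  refine (card_le_card (t := {⟨a, b⟩, ⟨b, a⟩}) ?_).trans card_le_two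
  rintro ⟨v, w⟩ hx
  rcases Sym2.eq_iff.1 (mem_filter.1 hx).2 with ⟨rfl, rfl⟩ | ⟨rfl, rfl⟩ <;> simp

lemma SmallSetsSparse.three_mul_card_le (hG : SmallSetsSparse G L σ) (hL : 0 < L)
    {U : Finset V} (hU : (#U : ℝ) ≤ σ / 4 * Fintype.card V) {pick : V → Finset V}
    (hadj : ∀ v ∈ U, ∀ w ∈ pick v, G.Adj v w) (hcard : ∀ v ∈ U, 0.0005 * L ≤ #(pick v)) :
    3 * #U ≤ #(U.biUnion pick \ U) := by
  by_contra! hlt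
  have hU0 : U.Nonempty := card_pos.1 (by omega)
  set S := U ∪ U.biUnion pick with hS
  have hScard : (#S : ℝ) ≤ 4 * #U := by
    have : #S ≤ 4 * #U := by
      rw [hS, ← union_sdiff_self_eq_union]
      have := card_union_le U (U.biUnion pick \ U)
      omega
    exact_mod_cast this
  have hfew := hG S (hU0.mono subset_union_left) (by linarith)
  have hedges : ∑ v ∈ U, #(pick v) ≤ 2 * eIn G S := sum_card_le_two_mul_card fun v hv w hw => by
    have hwS : w ∈ S := mem_union_right _ (mem_biUnion.2 ⟨v, hv, hw⟩)
    simp [hadj v hv w hw, hwS, show v ∈ S from mem_union_left _ hv]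
  have hmany : (#U : ℝ) * (0.0005 * L) ≤ 2 * eIn G S := calc
    _ = ∑ _v ∈ U, 0.0005 * L := by rw [sum_const, nsmul_eq_mul]
    _ ≤ ∑ v ∈ U, (#(pick v) : ℝ) := sum_le_sum hcard
    _ ≤ _ := by exact_mod_cast hedges
  have : L * (#S : ℝ) ≤ L * (4 * #U) := by gcongr
  linarith

section Selection

variable {K : ℕ} {pick : V → Finset V} {U : Finset V}

lemma IsSelection.card_biUnion_lowDegree (h : IsSelection G G' L K pick) (hle : G' ≤ G)
    (hlow : LowDegreesScattered G L) (hU : U ⊆ lowDegree G L) : #(U.biUnion pick) = 2 * #U := by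
  rw [card_biUnion, sum_congr rfl fun v hv => h.card_eq_two (hU hv), sum_const, smul_eq_mul,
    mul_comm]
  intro x hx y hy hxy
  refine Finset.disjoint_left.2 fun w hwx hwy => hxy ?_
  exact hlow.eq_of_walk (hU hx) (hU hy)
    (.cons (hle (h.adj hwx)) (.cons (hle (h.adj hwy)).symm .nil)) (by simp)

lemma IsSelection.notMem_lowDegree (h : IsSelection G G' L K pick) (hle : G' ≤ G)
    (hlow : LowDegreesScattered G L) {v w : V} (hw : w ∈ pick v) : w ∉ lowDegree G L := by
  intro hwlow
  by_cases hv : v ∈ lowDegree G L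
  · have hadj := hle (h.adj hw)
    exact hadj.ne (hlow.eq_of_walk hv hwlow (.cons hadj .nil) (by simp))
  · exact h.notMem_nearLowDegree hv hw (mem_nearLowDegree.2 ⟨w, hwlow, .inl rfl⟩)

/-- The neighbours picked for the vertices of low degree are all distinct, and differ from those
picked for the other vertices; at most `#U` of them are lost because they lie in `U`. -/
lemma IsSelection.two_mul_card_le (h : IsSelection G G' L K pick) (hle : G' ≤ G)
    (hlow : LowDegreesScattered G L) (hsparse : SmallSetsSparse G L σ) (hL : 0 < L)
    (hK : 0.0005 * L ≤ K) (hΓ : ∀ {v w}, w ∈ pick v → Γ.Adj v w)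
    (hU : (#U : ℝ) ≤ σ / 4 * Fintype.card V) : 2 * #U ≤ #(extNbhd Γ U) := by
  set U₁ := U \ lowDegree G L
  set U₂ := U ∩ lowDegree G L
  set A := U₁.biUnion pick \ U₁
  set B := U₂.biUnion pick
  have hU₁ : ∀ {v}, v ∈ U₁ ↔ v ∈ U ∧ v ∉ lowDegree G L := Finset.mem_sdiff
  have hcard : #U₁ + #U₂ = #U := card_sdiff_add_card_inter U (lowDegree G L)
  have hA : 3 * #U₁ ≤ #A := by
    refine hsparse.three_mul_card_le hL ?_ (fun v _ w hw => hle (h.adj hw)) fun v hv => ?_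
    · exact (Nat.cast_le.2 (by omega)).trans hU
    · rwa [h.card_eq (hU₁.1 hv).2]
  have hB : #B = 2 * #U₂ := h.card_biUnion_lowDegree hle hlow inter_subset_right
  have hdisj : Disjoint A (B \ U₁) := by
    refine Finset.disjoint_left.2 fun w hwA hwB => ?_
    obtain ⟨v, hv, hvw⟩ := mem_biUnion.1 (Finset.mem_sdiff.1 hwA).1
    obtain ⟨x, hx, hxw⟩ := mem_biUnion.1 (Finset.mem_sdiff.1 hwB).1
    exact h.notMem_nearLowDegree (hU₁.1 hv).2 hvw
      (mem_nearLowDegree.2 ⟨x, (mem_inter.1 hx).2, .inr (hle (h.adj hxw))⟩)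
  have hsub : A ∪ (B \ U₁) ⊆ extNbhd Γ U := by
    have key : ∀ {v w}, v ∈ U → w ∈ pick v → w ∉ U₁ → w ∈ extNbhd Γ U := fun hv hw hw₁ =>
      mem_extNbhd.2 ⟨fun hwU => hw₁ (hU₁.2 ⟨hwU, h.notMem_lowDegree hle hlow hw⟩), _, hv, hΓ hw⟩
    intro w hw
    simp only [A, B, mem_union, Finset.mem_sdiff, mem_biUnion] at hw
    rcases hw with ⟨⟨v, hv, hvw⟩, hw₁⟩ | ⟨⟨v, hv, hvw⟩, hw₁⟩
    · exact key (hU₁.1 hv).1 hvw hw₁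
    · exact key (mem_inter.1 hv).1 hvw hw₁
  have hle₁ := card_le_card hsub
  rw [card_union_of_disjoint hdisj] at hle₁
  have := le_card_sdiff U₁ B
  omega

end Selection

end Typical

/-! ### Local resilience of typical graphs -/

section HittingSets

variable {ι α : Type*} {I : Finset ι} {E : Finset α} {f : ι → Finset α} {a : ℝ}

lemma exists_mem_of_dense (hE : E.Nonempty) (hf : ∀ i ∈ I, f i ⊆ E)
    (hdense : ∀ i ∈ I, a * #E ≤ #(f i)) : ∃ e ∈ E, a * #I ≤ #{i ∈ I | e ∈ f i} := by
  refine exists_le_of_sum_le hE ?_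
  have hcount : ∑ e ∈ E, #{i ∈ I | e ∈ f i} = ∑ i ∈ I, #(f i) := by
    refine (sum_card_bipartiteAbove_eq_sum_card_bipartiteBelow fun e i => e ∈ f i).trans ?_
    refine sum_congr rfl fun i hi => ?_
    rw [bipartiteBelow, filter_mem_eq_inter, inter_eq_right.2 (hf i hi)]
  calc ∑ _e ∈ E, a * (#I : ℝ) = ∑ _i ∈ I, a * (#E : ℝ) := by
        simp only [sum_const, nsmul_eq_mul]; ring
    _ ≤ ∑ i ∈ I, (#(f i) : ℝ) := sum_le_sum hdense
    _ = ∑ e ∈ E, (#{i ∈ I | e ∈ f i} : ℝ) := by exact_mod_cast hcount.symm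

/-- Choose the elements greedily: each of them meets a proportion `a` of the sets that are still
missed. -/
lemma exists_subset_card_disjoint_le (ha : a ≤ 1) (hE : E.Nonempty) (hf : ∀ i ∈ I, f i ⊆ E)
    (hdense : ∀ i ∈ I, a * #E ≤ #(f i)) (k : ℕ) :
    ∃ T ⊆ E, #T ≤ k ∧ (#{i ∈ I | Disjoint T (f i)} : ℝ) ≤ #I * (1 - a) ^ k := by
  induction k with
  | zero => exact ⟨∅, by simp⟩
  | succ k ih =>
    obtain ⟨T, hT, hTk, hmiss⟩ := ih
    set J := {i ∈ I | Disjoint T (f i)}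
    have hJ : ∀ i ∈ J, i ∈ I := fun i hi => (mem_filter.1 hi).1
    obtain ⟨e, he, hhit⟩ := exists_mem_of_dense hE (fun i hi => hf i (hJ i hi))
      fun i hi => hdense i (hJ i hi)
    refine ⟨insert e T, insert_subset he hT, (card_insert_le _ _).trans (by omega), ?_⟩
    have hleft : {i ∈ I | Disjoint (insert e T) (f i)} = {i ∈ J | e ∉ f i} := by
      simp only [J, filter_filter, disjoint_insert_left, and_comm]
    have hsplit : (#{i ∈ J | e ∈ f i} : ℝ) + #{i ∈ J | e ∉ f i} = #J := by
      exact_mod_cast card_filter_add_card_filter_not (s := J) fun i => e ∈ f i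
    calc (#{i ∈ I | Disjoint (insert e T) (f i)} : ℝ) ≤ #J * (1 - a) := by rw [hleft]; linarith
      _ ≤ #I * (1 - a) ^ k * (1 - a) := mul_le_mul_of_nonneg_right hmiss (by linarith)
      _ = #I * (1 - a) ^ (k + 1) := by ring

lemma exists_hitting_set (ha : a ≤ 1) (hE : E.Nonempty) (hf : ∀ i ∈ I, f i ⊆ E)
    (hdense : ∀ i ∈ I, a * #E ≤ #(f i)) {k : ℕ} (hk : #I * (1 - a) ^ k < 1) :
    ∃ T ⊆ E, #T ≤ k ∧ ∀ i ∈ I, ¬Disjoint T (f i) := by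
  obtain ⟨T, hT, hTk, hmiss⟩ := exists_subset_card_disjoint_le ha hE hf hdense k
  refine ⟨T, hT, hTk, filter_eq_empty_iff.1 (card_eq_zero.1 ?_)⟩
  exact Nat.lt_one_iff.1 (by exact_mod_cast hmiss.trans_lt hk)

lemma four_pow_mul_one_sub_pow_lt_one {n k : ℕ} (hn : n ≠ 0) (ha : a ≤ 1) (hk : 2 * n ≤ k * a) :
    (4 : ℝ) ^ n * (1 - a) ^ k < 1 := by
  have hexp : 4 * Real.exp (-2) < 1 := by
    have h : Real.exp 2 = Real.exp 1 ^ 2 := by rw [← Real.exp_nat_mul]; norm_num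
    rw [Real.exp_neg, ← div_eq_mul_inv, div_lt_one (Real.exp_pos _), h]
    nlinarith [Real.exp_one_gt_d9]
  calc (4 : ℝ) ^ n * (1 - a) ^ k ≤ 4 ^ n * Real.exp (-a) ^ k := by
        have := sub_nonneg.2 ha
        gcongr
        exact Real.one_sub_le_exp_neg a
    _ = 4 ^ n * Real.exp (-(k * a)) := by rw [← Real.exp_nat_mul, mul_neg]
    _ ≤ 4 ^ n * Real.exp (n * -2) := by gcongr; linarith
    _ = (4 * Real.exp (-2)) ^ n := by rw [Real.exp_nat_mul, mul_pow]
    _ < 1 := pow_lt_one₀ (by positivity) hexp hn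

end HittingSets

section Resilience

variable {V : Type*} [Fintype V] {G G' : SimpleGraph V} {L σ : ℝ}

lemma IsTypical.eBetween_ge_of_le (hG : IsTypical G L σ) (hL : 0 ≤ L) (hle : G' ≤ G)
    (hloss : ∀ v, (G.degree v : ℝ) ≤ G'.degree v + 0.01 * L) {U W : Finset V} (hdisj : Disjoint U W)
    (hU : σ / 4 * Fintype.card V ≤ #U) (hW : (Fintype.card V : ℝ) / 4 ≤ #W) :
    #U * (L / 20) ≤ eBetween G' U W := by
  have hmany := hG.largePairsDense U W hdisj hU hW
  have hlost : (eBetween G U W : ℝ) ≤ eBetween G' U W + #U * (0.01 * L) := calc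
    _ ≤ (eBetween G' U W + ∑ u ∈ U, (G.degree u - G'.degree u : ℕ) : ℝ) := by
      exact_mod_cast eBetween_le_add_sum_degree_sub hle U W
    _ ≤ eBetween G' U W + #U * (0.01 * L) := by
      gcongr
      have hdeg (u : V) : G'.degree u ≤ G.degree u := degree_le_of_le hle
      have hsum := sum_le_card_nsmul U (fun u => ((G.degree u - G'.degree u : ℕ) : ℝ)) (0.01 * L)
        fun u _ => by rw [Nat.cast_sub (hdeg u)]; linarith [hloss u]
      rwa [nsmul_eq_mul, ← Nat.cast_sum] at hsum
  have : 0 ≤ #U * L := by positivity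
  linarith

/-- Each pair of large disjoint sets spans a constant proportion of the edges of `G'`, so that a
greedy choice succeeds. -/
lemma IsTypical.exists_hitting_edges [Nonempty V] (hG : IsTypical G L σ) (hσ : 0 < σ) (hσ1 : σ ≤ 1)
    (hL : 0 < L) (hle : G' ≤ G) (hloss : ∀ v, (G.degree v : ℝ) ≤ G'.degree v + 0.01 * L)
    (hne : G'.edgeFinset.Nonempty) :
    ∃ T ⊆ G'.edgeFinset, (#T : ℝ) ≤ 160 / σ * Fintype.card V + 1 ∧
      ∀ U W : Finset V, Disjoint U W → σ / 4 * Fintype.card V ≤ #U →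
        (Fintype.card V : ℝ) / 4 ≤ #W → ∃ u ∈ U, ∃ w ∈ W, s(u, w) ∈ T := by
  let I : Finset (Finset V × Finset V) :=
    {x | Disjoint x.1 x.2 ∧ σ / 4 * Fintype.card V ≤ #x.1 ∧ (Fintype.card V : ℝ) / 4 ≤ #x.2}
  have hI : ∀ {x}, x ∈ I ↔ Disjoint x.1 x.2 ∧ σ / 4 * Fintype.card V ≤ #x.1 ∧
    (Fintype.card V : ℝ) / 4 ≤ #x.2 := by simp [I]
  have hIcard : (#I : ℝ) ≤ 4 ^ Fintype.card V := by
    have : #I ≤ 4 ^ Fintype.card V := (card_le_univ I).trans_eq <| by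
      rw [Fintype.card_prod, Fintype.card_finset, ← mul_pow]; norm_num
    exact_mod_cast this
  have hdense : ∀ x ∈ I, σ / 80 * #G'.edgeFinset ≤ #(G'.edgeFinset ∩ pairsBetween x.1 x.2) := by
    intro x hx
    obtain ⟨hdisj, hU, hW⟩ := hI.1 hx
    rw [← eBetween_eq_card_inter _ hdisj]
    have hmany := hG.eBetween_ge_of_le hL.le hle hloss hdisj hU hW
    have hedges : (#G'.edgeFinset : ℝ) ≤ Fintype.card V * L := hG.card_edgeFinset_le.trans' <|
      Nat.cast_le.2 (card_le_card (edgeFinset_subset_edgeFinset.2 hle))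
    calc σ / 80 * (#G'.edgeFinset : ℝ) ≤ σ / 80 * (Fintype.card V * L) := by gcongr
      _ = σ / 4 * Fintype.card V * (L / 20) := by ring
      _ ≤ #x.1 * (L / 20) := by gcongr
      _ ≤ eBetween G' x.1 x.2 := hmany
  have hk : #I * (1 - σ / 80) ^ ⌈160 / σ * Fintype.card V⌉₊ < 1 := by
    refine (four_pow_mul_one_sub_pow_lt_one Fintype.card_ne_zero (by linarith) ?_).trans_le' <|
      mul_le_mul_of_nonneg_right hIcard (pow_nonneg (by linarith) _)
    calc (2 * Fintype.card V : ℝ) = 160 / σ * Fintype.card V * (σ / 80) := by field_simp; norm_num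
      _ ≤ ⌈160 / σ * Fintype.card V⌉₊ * (σ / 80) := by gcongr; exact Nat.le_ceil _
  obtain ⟨T, hT, hTcard, hhit⟩ := exists_hitting_set (by linarith) hne
    (fun _ _ => inter_subset_left) hdense hk
  refine ⟨T, hT, ?_, fun U W hdisj hU hW => ?_⟩
  · exact (Nat.cast_le.2 hTcard).trans (Nat.ceil_lt_add_one (by positivity)).le
  · obtain ⟨e, heT, he⟩ := Finset.not_disjoint_iff.1 (hhit (U, W) (hI.2 ⟨hdisj, hU, hW⟩))
    obtain ⟨⟨u, w⟩, huw, rfl⟩ := mem_image.1 (mem_inter.1 he).2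
    exact ⟨u, (mem_product.1 huw).1, w, (mem_product.1 huw).2, heT⟩

/-- `U` and the complement of `U ∪ N(U)` span no edge. -/
lemma two_mul_card_le_card_extNbhd {U : Finset V}
    (hjoin : ∀ W, Disjoint U W → (Fintype.card V : ℝ) / 4 ≤ #W → ∃ u ∈ U, ∃ w ∈ W, G.Adj u w)
    (hU : 4 * #U ≤ Fintype.card V) : 2 * #U ≤ #(extNbhd G U) := by
  by_contra! hlt
  have hW : Fintype.card V ≤ 4 * #(univ \ (U ∪ extNbhd G U)) := by
    have := le_card_sdiff (U ∪ extNbhd G U) univ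
    have := card_union_le U (extNbhd G U)
    rw [card_univ] at *
    omega
  have hW' : (Fintype.card V : ℝ) ≤ 4 * #(univ \ (U ∪ extNbhd G U)) := by exact_mod_cast hW
  obtain ⟨u, hu, w, hw, hadj⟩ := hjoin (univ \ (U ∪ extNbhd G U))
    (disjoint_sdiff.mono_left subset_union_left) (by linarith)
  simp only [Finset.mem_sdiff, mem_univ, mem_union, not_or, true_and] at hw
  exact hw.2 (mem_extNbhd.2 ⟨hw.1, u, hu, hadj⟩)

lemma IsTypical.exists_le_small_sets_expand (hG : IsTypical G L σ) (hL : 20000 ≤ L) (hle : G' ≤ G)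
    (htwo : ∀ v, 2 ≤ G'.degree v) (hhigh : ∀ v, v ∉ lowDegree G L → 0.09 * L ≤ G'.degree v) :
    ∃ Γ ≤ G', (#Γ.edgeFinset : ℝ) ≤ Fintype.card V * (0.0005 * L + 3) ∧
      ∀ U : Finset V, #U ≤ σ / 4 * Fintype.card V → 2 * #U ≤ #(extNbhd Γ U) := by
  set K := ⌈0.0005 * L⌉₊
  have hK : K < 0.0005 * L + 1 := Nat.ceil_lt_add_one (by linarith)
  obtain ⟨pick, hpick⟩ : ∃ pick, IsSelection G G' L K pick := by
    refine exists_isSelection hG.lowDegreesScattered hG.fiveSetsSparse hle (fun v hv => ?_) htwo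
    have : ((K + 3 : ℕ) : ℝ) ≤ G'.degree v := by push_cast; linarith [hhigh v hv]
    exact_mod_cast this
  obtain ⟨Γ, hΓ⟩ : ∃ Γ : SimpleGraph V, ∀ {v w}, Γ.Adj v w ↔ w ∈ pick v ∨ v ∈ pick w :=
    ⟨.fromRel fun v w => w ∈ pick v, fun {v w} => (fromRel_adj _ _ _).trans <|
      and_iff_right_of_imp fun h => h.elim (fun h => (hpick.adj h).ne) fun h => (hpick.adj h).ne'⟩
  have hedges : Γ.edgeFinset ⊆ univ.biUnion fun v => (pick v).image fun w => s(v, w) := by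
    intro e he
    induction e with | _ a b =>
    simp only [mem_biUnion, mem_univ, true_and, mem_image]
    rcases hΓ.1 (mem_edgeFinset.1 he) with h | h
    · exact ⟨a, b, h, rfl⟩
    · exact ⟨b, a, h, Sym2.eq_swap⟩
  have hcard : #Γ.edgeFinset ≤ Fintype.card V * (K + 2) := by
    refine (card_le_card hedges).trans (card_biUnion_le_card_mul _ _ _ fun v _ => ?_)
    refine card_image_le.trans ?_
    by_cases hv : v ∈ lowDegree G L
    · rw [hpick.card_eq_two hv]; omega
    · rw [hpick.card_eq hv]; omega
  refine ⟨Γ, fun v w h => ?_, ?_, fun U hU => ?_⟩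
  · exact (hΓ.1 h).elim hpick.adj fun h => (hpick.adj h).symm
  · calc (#Γ.edgeFinset : ℝ) ≤ Fintype.card V * (K + 2) := by exact_mod_cast hcard
      _ ≤ Fintype.card V * (0.0005 * L + 3) := by gcongr ?_ * ?_; linarith
  · exact hpick.two_mul_card_le hle hG.lowDegreesScattered hG.smallSetsSparse (by linarith)
      (Nat.le_ceil _) (fun h => hΓ.2 (.inl h)) hU

lemma IsTypical.exists_le_large_sets_joined [Nonempty V] (hG : IsTypical G L σ) (hσ : 0 < σ)
    (hσ1 : σ ≤ 1) (hL : 0 < L) (hle : G' ≤ G)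
    (hloss : ∀ v, (G.degree v : ℝ) ≤ G'.degree v + 0.01 * L) (hne : G'.edgeFinset.Nonempty) :
    ∃ Γ ≤ G', (#Γ.edgeFinset : ℝ) ≤ 160 / σ * Fintype.card V + 1 ∧
      ∀ U W : Finset V, Disjoint U W → σ / 4 * Fintype.card V ≤ #U →
        (Fintype.card V : ℝ) / 4 ≤ #W → ∃ u ∈ U, ∃ w ∈ W, Γ.Adj u w := by
  obtain ⟨T, hT, hcard, hjoin⟩ := hG.exists_hitting_edges hσ hσ1 hL hle hloss hne
  have hT' : ∀ {u w}, s(u, w) ∈ T → G'.Adj u w := fun h => mem_edgeFinset.1 (hT h)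
  obtain ⟨Γ, hΓ⟩ : ∃ Γ : SimpleGraph V, ∀ {u w}, Γ.Adj u w ↔ s(u, w) ∈ T :=
    ⟨fromEdgeSet T, (fromEdgeSet_adj _).trans (and_iff_left_of_imp fun h => (hT' h).ne)⟩
  refine ⟨Γ, fun u w h => hT' (hΓ.1 h), ?_, fun U W hdisj hU hW => ?_⟩
  · refine hcard.trans' (Nat.cast_le.2 (card_le_card fun e he => ?_))
    induction e with | _ u w => exact hΓ.1 (mem_edgeFinset.1 he)
  · obtain ⟨u, hu, w, hw, huw⟩ := hjoin U W hdisj hU hW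
    exact ⟨u, hu, w, hw, hΓ.2 huw⟩

lemma IsTypical.exists_sparse_expander (hG : IsTypical G L σ) [Nonempty V] (hσ : 0 < σ)
    (hσ1 : σ ≤ 1) (hL : 20000 ≤ L) (hle : G' ≤ G)
    (hloss : ∀ v, (G.degree v : ℝ) ≤ G'.degree v + 0.01 * L) (htwo : ∀ v, 2 ≤ G'.degree v) :
    ∃ Γ ≤ G', (#Γ.edgeFinset : ℝ) ≤
        Fintype.card V * (0.0005 * L + 3) + (160 / σ * Fintype.card V + 1) ∧
      IsExpander Γ (Fintype.card V / 4 : ℕ) fun _ => 2 := by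
  have hhigh : ∀ v, v ∉ lowDegree G L → 0.09 * L ≤ G'.degree v := fun v hv => by
    rw [mem_lowDegree, not_lt] at hv
    linarith [hloss v]
  have hne : G'.edgeFinset.Nonempty := by
    obtain ⟨v⟩ := ‹Nonempty V›
    obtain ⟨w, hw⟩ := (G'.degree_pos_iff_exists_adj v).1 (by linarith [htwo v])
    exact ⟨s(v, w), mem_edgeFinset.2 hw⟩
  obtain ⟨Γ₁, hle₁, hcard₁, hsmall⟩ := hG.exists_le_small_sets_expand hL hle htwo hhigh
  obtain ⟨Γ₂, hle₂, hcard₂, hjoin⟩ :=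
    hG.exists_le_large_sets_joined hσ hσ1 (by linarith) hle hloss hne
  refine ⟨Γ₁ ⊔ Γ₂, sup_le hle₁ hle₂, ?_, isExpander_two_iff.2 fun U hU => ?_⟩
  · refine (Nat.cast_le.2 (card_edgeFinset_le_add le_rfl)).trans ?_
    push_cast
    linarith
  · rcases le_total (#U : ℝ) (σ / 4 * Fintype.card V) with hU' | hU'
    · exact (hsmall U hU').trans (card_le_card (extNbhd_mono le_sup_left U))
    · refine (two_mul_card_le_card_extNbhd (fun W hW hcard => ?_) (by omega)).trans
        (card_le_card (extNbhd_mono le_sup_right U))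
      exact hjoin U W hW hU' hcard

lemma sq_div_le_card_boosterGraph_edgeFinset [Nonempty V] {Γ : SimpleGraph V}
    (hΓ : IsExpander Γ (Fintype.card V / 4 : ℕ) fun _ => 2) (hcard : 12 ≤ Fintype.card V)
    (hham : ¬Γ.IsHamiltonian) :
    (Fintype.card V : ℝ) ^ 2 / 32 ≤ #(boosterGraph Γ).edgeFinset := by
  have hmany := sq_le_two_mul_card_boosterGraph_edgeFinset hΓ (by omega) hham
  have hn : Fintype.card V ≤ 4 * (Fintype.card V / 4 + 1) := by omega
  have h32 : Fintype.card V ^ 2 ≤ 32 * #(boosterGraph Γ).edgeFinset := by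
    have := Nat.pow_le_pow_left hn 2
    linarith
  have h32' : (Fintype.card V : ℝ) ^ 2 ≤ 32 * #(boosterGraph Γ).edgeFinset := by
    exact_mod_cast h32
  linarith

lemma BoosterRich.exists_isBooster (hG : BoosterRich G L) (hle : G' ≤ G)
    (hloss : ∀ v, (G.degree v : ℝ) ≤ G'.degree v + 0.01 * L) {Γ : SimpleGraph V} (hΓ : Γ ≤ G)
    (hsparse : (#Γ.edgeFinset : ℝ) ≤ 0.001 * Fintype.card V * L)
    (hmany : (Fintype.card V : ℝ) ^ 2 / 32 ≤ #(boosterGraph Γ).edgeFinset) :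
    ∃ u v, IsBooster Γ u v ∧ G'.Adj u v := by
  by_contra! hnone
  have hsub : G.edgeFinset ∩ (boosterGraph Γ).edgeFinset ⊆ G.edgeFinset \ G'.edgeFinset := by
    intro e he
    induction e with | _ u v =>
    simp only [mem_inter, mem_edgeFinset, mem_edgeSet, Finset.mem_sdiff] at he ⊢
    exact ⟨he.1, hnone u v he.2⟩
  have hcard : (#(G.edgeFinset ∩ (boosterGraph Γ).edgeFinset) : ℝ) + #G'.edgeFinset ≤
      #G.edgeFinset := by
    have hsplit := card_sdiff_add_card_eq_card (edgeFinset_subset_edgeFinset.2 hle)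
    exact_mod_cast hsplit ▸ Nat.add_le_add_right (card_le_card hsub) _
  have hlt := hG Γ hΓ hsparse hmany
  have := two_mul_card_edgeFinset_le_add hloss
  linarith

theorem IsTypical.isHamiltonian_of_le [Nonempty V] (hG : IsTypical G L σ) (hσ : 0 < σ)
    (hσ1 : σ ≤ 1) (hL : 20000 + 320000 / σ ≤ L) (hn : 12 ≤ Fintype.card V) (hle : G' ≤ G)
    (hloss : ∀ v, (G.degree v : ℝ) ≤ G'.degree v + 0.01 * L) (htwo : ∀ v, 2 ≤ G'.degree v) :
    G'.IsHamiltonian := by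
  have hσ' : 0 < 320000 / σ := by positivity
  obtain ⟨Γ₀, hΓ₀, hcard, hexp⟩ := hG.exists_sparse_expander hσ hσ1 (by linarith) hle hloss htwo
  refine isHamiltonian_of_forall_exists_isBooster hΓ₀ fun Γ hΓ hΓ' hΓcard hham => ?_
  refine hG.boosterRich.exists_isBooster hle hloss (hΓ'.trans hle) ?_
    (sq_div_le_card_boosterGraph_edgeFinset (hexp.mono hΓ) hn hham)
  have hΓcard' : (#Γ.edgeFinset : ℝ) ≤ #Γ₀.edgeFinset + Fintype.card V := by
    exact_mod_cast hΓcard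
  have hnL : (Fintype.card V : ℝ) * (20000 + 320000 / σ) ≤ Fintype.card V * L := by gcongr
  have hn' : (12 : ℝ) ≤ Fintype.card V := by exact_mod_cast hn
  have : (Fintype.card V : ℝ) * (320000 / σ) = 2000 * (160 / σ * Fintype.card V) := by ring
  linarith

lemma not_isHamiltonian_of_subsingleton_neighborSet [Nontrivial V] {v : V}
    (h : (G.neighborSet v).Subsingleton) : ¬G.IsHamiltonian := by
  intro hham
  obtain ⟨q, hq⟩ := hham.exists_isHamiltonianCycle v
  have htwo := hq.isCycle.ncard_neighborSet_toSubgraph_eq_two (hq.mem_support v)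
  have hone : (q.toSubgraph.neighborSet v).ncard ≤ 1 :=
    (Set.ncard_le_one (Set.toFinite _)).2 fun x hx y hy =>
      h (q.toSubgraph.adj_sub hx) (q.toSubgraph.adj_sub hy)
  omega

/-- Delete all edges at `v` except for one. -/
lemma exists_maxDegree_eq_and_not_isHamiltonian_sdiff [Nontrivial V] {v : V}
    (hv : 2 ≤ G.degree v) :
    ∃ H ≤ G, H.maxDegree = G.degree v - 1 ∧ ¬(G \ H).IsHamiltonian := by
  obtain ⟨w, hvw⟩ := (G.degree_pos_iff_exists_adj v).1 (by omega)
  obtain ⟨H, hH⟩ : ∃ H : SimpleGraph V, ∀ {a b},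
      H.Adj a b ↔ G.Adj a b ∧ (a = v ∨ b = v) ∧ s(a, b) ≠ s(v, w) := by
    refine ⟨(G ⊓ starGraph v).deleteEdges {s(v, w)}, fun {a b} => ?_⟩
    simp only [deleteEdges_adj, inf_adj, starGraph_adj, Set.mem_singleton_iff]
    exact ⟨fun h => ⟨h.1.1, h.1.2.2, h.2⟩, fun h => ⟨⟨h.1, h.1.ne, h.2.1⟩, h.2.2⟩⟩
  have hdeg : H.degree v = G.degree v - 1 := by
    rw [← card_neighborFinset_eq_degree, ← card_neighborFinset_eq_degree,
      ← card_erase_of_mem ((mem_neighborFinset _ _ _).2 hvw)]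
    congr 1
    ext x
    simp only [mem_neighborFinset, hH, mem_erase, true_or, true_and, ne_eq, Sym2.congr_right]
    tauto
  have hdeg' : ∀ x, x ≠ v → H.degree x ≤ 1 := fun x hx => by
    rw [← card_neighborFinset_eq_degree, ← card_singleton v]
    refine card_le_card fun y hy => mem_singleton.2 ?_
    exact (hH.1 ((mem_neighborFinset _ _ _).1 hy)).2.1.resolve_left hx
  refine ⟨H, fun a b h => (hH.1 h).1, le_antisymm ?_ (hdeg ▸ H.degree_le_maxDegree v), ?_⟩
  · refine maxDegree_le_of_forall_degree_le _ _ fun x => ?_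
    rcases eq_or_ne x v with rfl | hx
    · exact hdeg.le
    · exact (hdeg' x hx).trans (by omega)
  · have key : ∀ {x}, (G \ H).Adj v x → x = w := fun {x} hx => by
      by_contra hxw
      exact hx.2 (hH.2 ⟨hx.1, .inl rfl, fun h => hxw (Sym2.congr_right.1 h)⟩)
    exact not_isHamiltonian_of_subsingleton_neighborSet fun x hx y hy =>
      (key hx).trans (key hy).symm

lemma IsTypical.isHamiltonian_of_maxDegree_add_two_le [Nonempty V] (hG : IsTypical G L σ)
    (hσ : 0 < σ) (hσ1 : σ ≤ 1) (hL : 20000 + 320000 / σ ≤ L) (hn : 12 ≤ Fintype.card V)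
    {H : SimpleGraph V} (hle : G' ≤ G) (hsup : G ≤ G' ⊔ H) (hH : H.maxDegree + 2 ≤ G.minDegree) :
    G'.IsHamiltonian := by
  have hdeg (a b : V) : H.degree a + 2 ≤ G.degree b :=
    (Nat.add_le_add_right (H.degree_le_maxDegree a) 2).trans (hH.trans (G.minDegree_le_degree b))
  have hsub := degree_le_degree_add_degree hsup
  obtain ⟨w, hw⟩ := hG.exists_degree_le
  refine hG.isHamiltonian_of_le hσ hσ1 hL hn hle (fun a => ?_) fun a => ?_
  · have : (G.degree a : ℝ) ≤ G'.degree a + H.degree a := by exact_mod_cast hsub a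
    have : (H.degree a + 2 : ℝ) ≤ G.degree w := by exact_mod_cast hdeg a w
    linarith
  · linarith [hsub a, hdeg a a]

theorem IsTypical.local_resilience [Nonempty V] [DecidableEq V] (hG : IsTypical G L σ) (hσ : 0 < σ)
    (hσ1 : σ ≤ 1) (hL : 20000 + 320000 / σ ≤ L) (hn : 12 ≤ Fintype.card V) :
    (∀ H ≤ G, H.maxDegree ≤ G.minDegree - 2 → (G \ H).IsHamiltonian) ∧
      ∃ H ≤ G, H.maxDegree = G.minDegree - 1 ∧ ¬(G \ H).IsHamiltonian := by
  obtain ⟨v, hv⟩ := G.exists_minimal_degree_vertex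
  have htwo : 2 ≤ G.minDegree := hv ▸ hG.two_le_degree v
  constructor
  · intro H _ hH
    convert hG.isHamiltonian_of_maxDegree_add_two_le (G' := G \ H) hσ hσ1 hL hn sdiff_le
      (by simp) (by omega : H.maxDegree + 2 ≤ G.minDegree)
  · have : Nontrivial V := Fintype.one_lt_card_iff_nontrivial.1 (by omega)
    rw [hv]
    convert exists_maxDegree_eq_and_not_isHamiltonian_sdiff (hG.two_le_degree v)

end Resilience

/-! ### Random subsets -/

section RandomSubsets

variable {α : Type*} {p : ℝ} {E F F' : Finset α}

/-- The expectation of `f A` for a random subset `A` of `F` that contains each element of `F`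
independently with probability `p`. -/
noncomputable def bernoulliExp (p : ℝ) (F : Finset α) (f : Finset α → ℝ) : ℝ :=
  ∑ A ∈ F.powerset, p ^ #A * (1 - p) ^ (#F - #A) * f A

lemma bernoulliExp_prod [DecidableEq α] (p : ℝ) (F : Finset α) (a b : α → ℝ) :
    bernoulliExp p F (fun A => (∏ e ∈ A, a e) * ∏ e ∈ F \ A, b e) =
      ∏ e ∈ F, (p * a e + (1 - p) * b e) := by
  rw [prod_add, bernoulliExp]
  refine sum_congr rfl fun A hA => ?_
  rw [prod_mul_distrib, prod_mul_distrib, prod_const, prod_const,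
    card_sdiff_of_subset (mem_powerset.1 hA)]
  ring

lemma bernoulliExp_one (p : ℝ) (F : Finset α) : bernoulliExp p F (fun _ => 1) = 1 := by
  simpa using bernoulliExp_prod p F (fun _ => 1) fun _ => 1

lemma bernoulliExp_mono (hp0 : 0 ≤ p) (hp1 : p ≤ 1) {f g : Finset α → ℝ}
    (h : ∀ A ⊆ F, f A ≤ g A) : bernoulliExp p F f ≤ bernoulliExp p F g :=
  sum_le_sum fun A hA => mul_le_mul_of_nonneg_left (h A (mem_powerset.1 hA))
    (mul_nonneg (pow_nonneg hp0 _) (pow_nonneg (sub_nonneg.2 hp1) _))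

/-- The probability that a binomial random variable with parameters `N` and `p` is at most `k`. -/
noncomputable def binomialCDF (p : ℝ) (N k : ℕ) : ℝ :=
  ∑ j ∈ range (k + 1), N.choose j * p ^ j * (1 - p) ^ (N - j)

lemma bernoulliExp_card_le (p : ℝ) (F : Finset α) (k : ℕ) :
    bernoulliExp p F (fun A => if #A ≤ k then 1 else 0) = binomialCDF p #F k := by
  rw [bernoulliExp, sum_powerset_apply_card fun j =>
    p ^ j * (1 - p) ^ (#F - j) * if j ≤ k then 1 else 0]
  simp only [mul_ite, mul_one, mul_zero, smul_ite, smul_zero, nsmul_eq_mul, ← mul_assoc]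
  rw [← sum_filter, binomialCDF]
  refine sum_subset (fun j hj => by grind) fun j _ hj => ?_
  rw [Nat.choose_eq_zero_of_lt (by grind), Nat.cast_zero, zero_mul, zero_mul]

lemma binomialCDF_nonneg (hp0 : 0 ≤ p) (hp1 : p ≤ 1) (N k : ℕ) : 0 ≤ binomialCDF p N k := by
  have := sub_nonneg.2 hp1
  unfold binomialCDF
  positivity

lemma binomialCDF_mul_le (hp0 : 0 ≤ p) (hp1 : p ≤ 1) (N k : ℕ) :
    binomialCDF p N k * (1 - p) ≤ binomialCDF p (N + 1) k := by
  have := sub_nonneg.2 hp1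
  rw [binomialCDF, sum_mul]
  refine sum_le_sum fun j _ => ?_
  rcases le_or_gt j N with hj | hj
  · rw [mul_assoc, ← pow_succ, ← Nat.sub_add_comm hj]
    gcongr
    exact N.le_succ
  · rw [Nat.choose_eq_zero_of_lt hj]
    simp only [Nat.cast_zero, zero_mul]
    positivity

variable [DecidableEq α]

lemma bernoulliExp_union (p : ℝ) (h : Disjoint F F') (f g : Finset α → ℝ) :
    bernoulliExp p (F ∪ F') (fun A => f (A ∩ F) * g (A ∩ F')) =
      bernoulliExp p F f * bernoulliExp p F' g := by
  rw [bernoulliExp, bernoulliExp, bernoulliExp, sum_mul_sum, ← sum_product']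
  refine sum_nbij' (fun A => (A ∩ F, A ∩ F')) (fun x => x.1 ∪ x.2) (by simp)
    (fun x hx => ?_) (fun A hA => ?_) (fun x hx => ?_) fun A hA => ?_
  · rw [mem_product, mem_powerset, mem_powerset] at hx
    exact mem_powerset.2 (union_subset_union hx.1 hx.2)
  · rw [← inter_union_distrib_left, inter_eq_left.2 (mem_powerset.1 hA)]
  · rw [mem_product, mem_powerset, mem_powerset] at hx
    have := Finset.disjoint_left.1 h
    ext e <;> grind
  · have hA' := mem_powerset.1 hA
    have hcard : #A = #(A ∩ F) + #(A ∩ F') := by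
      rw [← card_union_of_disjoint (h.mono inter_subset_right inter_subset_right),
        ← inter_union_distrib_left, inter_eq_left.2 hA']
    have h₁ : #(A ∩ F) ≤ #F := card_le_card inter_subset_right
    have h₂ : #(A ∩ F') ≤ #F' := card_le_card inter_subset_right
    rw [card_union_of_disjoint h, hcard,
      show #F + #F' - (#(A ∩ F) + #(A ∩ F')) = #F - #(A ∩ F) + (#F' - #(A ∩ F')) by omega,
      pow_add, pow_add]
    ring

lemma bernoulliExp_inter (p : ℝ) (h : F ⊆ E) (f : Finset α → ℝ) :
    bernoulliExp p E (fun A => f (A ∩ F)) = bernoulliExp p F f := by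
  have := bernoulliExp_union p (disjoint_sdiff (s := F) (t := E)) f fun _ => 1
  simpa only [union_sdiff_of_subset h, mul_one, bernoulliExp_one] using this

lemma bernoulliExp_inter_mul_inter (p : ℝ) (h : Disjoint F F') (hF : F ⊆ E) (hF' : F' ⊆ E)
    (f g : Finset α → ℝ) :
    bernoulliExp p E (fun A => f (A ∩ F) * g (A ∩ F')) =
      bernoulliExp p F f * bernoulliExp p F' g := by
  rw [← bernoulliExp_union p h, ← bernoulliExp_inter p (union_subset hF hF')]
  simp only [inter_assoc, union_inter_cancel_left, union_inter_cancel_right]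

/-- Here `exp (p * (exp t - 1))` dominates the moment generating function `1 + p * (exp t - 1)` of a
Bernoulli variable. -/
lemma bernoulliExp_exp_sum_le (hp0 : 0 ≤ p) (hp1 : p ≤ 1) {R : Finset α} (hR : R ⊆ F) {θ : α → ℝ}
    (hθ : ∀ e ∈ R, θ e = 0) :
    bernoulliExp p F (fun A => if R ⊆ A then Real.exp (∑ e ∈ A, θ e) else 0) ≤
      p ^ #R * Real.exp (∑ e ∈ F, p * (Real.exp (θ e) - 1)) := by
  have hprod : ∀ A ⊆ F, (if R ⊆ A then Real.exp (∑ e ∈ A, θ e) else 0) =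
      (∏ e ∈ A, Real.exp (θ e)) * ∏ e ∈ F \ A, if e ∈ R then 0 else 1 := by
    intro A _
    rw [← Real.exp_sum]
    split_ifs with hRA
    · rw [prod_eq_one fun e he => if_neg fun h => (Finset.mem_sdiff.1 he).2 (hRA h), mul_one]
    · obtain ⟨e, heR, heA⟩ := not_subset.1 hRA
      have hzero : ∏ e ∈ F \ A, (if e ∈ R then 0 else 1 : ℝ) = 0 :=
        Finset.prod_eq_zero (Finset.mem_sdiff.2 ⟨hR heR, heA⟩) (if_pos heR)
      rw [hzero, mul_zero]
  calc _ ≤ bernoulliExp p F _ := bernoulliExp_mono hp0 hp1 fun A hA => (hprod A hA).le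
    _ = ∏ e ∈ F, (p * Real.exp (θ e) + (1 - p) * if e ∈ R then 0 else 1) := bernoulliExp_prod ..
    _ ≤ ∏ e ∈ F, ((if e ∈ R then p else 1) * Real.exp (p * (Real.exp (θ e) - 1))) := by
      refine prod_le_prod (fun e _ => ?_) fun e _ => ?_
      · have : 0 ≤ 1 - p := sub_nonneg.2 hp1
        split_ifs <;> positivity
      · split_ifs with he
        · simp [hθ e he]
        · linarith [Real.add_one_le_exp (p * (Real.exp (θ e) - 1))]
    _ = _ := by rw [prod_mul_distrib, prod_ite_mem, inter_eq_right.2 hR, prod_const, Real.exp_sum]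

end RandomSubsets

/-! ### Random graphs -/

section PairSets

variable {V : Type*} {U W : Finset V}

lemma card_pairsIn (S : Finset V) : #(pairsIn S) = (#S).choose 2 := Sym2.card_image_offDiag S

lemma card_pairsBetween (h : Disjoint U W) : #(pairsBetween U W) = #U * #W := by
  rw [pairsBetween, card_image_of_injOn (injOn_mk_product h), card_product]

lemma disjoint_pairsBetween_singleton {u v : V} (huv : u ≠ v) {B C : Finset V} (hu : u ∉ C) :
    Disjoint (pairsBetween {u} B) (pairsBetween {v} C) := by
  simp only [pairsBetween, Finset.disjoint_left, mem_image, mem_product, mem_singleton, Prod.exists]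
  grind [Sym2.eq_iff]

variable [Fintype V]

lemma disjoint_pairsIn_pairsBetween (S U : Finset V) :
    Disjoint (pairsIn S) (pairsBetween U (univ \ S)) := by
  refine Finset.disjoint_left.2 fun e he he' => ?_
  obtain ⟨x, hx, rfl⟩ := mem_image.1 he'
  exact (Finset.mem_sdiff.1 (mem_product.1 hx).2).2 (mk_mem_pairsIn.1 he).2.2

lemma pairsIn_subset_univ (S : Finset V) : pairsIn S ⊆ pairsIn univ :=
  image_subset_image (offDiag_mono (subset_univ S))

lemma pairsBetween_subset_univ (h : Disjoint U W) : pairsBetween U W ⊆ pairsIn univ := by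
  refine image_subset_iff.2 fun x hx => mk_mem_pairsIn.2 ⟨?_, mem_univ _, mem_univ _⟩
  rw [mem_product] at hx
  exact disjoint_iff_ne.1 h _ hx.1 _ hx.2

lemma edgeFinset_subset_pairsIn_univ (G : SimpleGraph V) : G.edgeFinset ⊆ pairsIn univ := by
  intro e he
  induction e with | _ a b => simpa [mk_mem_pairsIn] using (mem_edgeFinset.1 he).ne

lemma sum_edgeFinset (f : Finset (Sym2 V) → ℝ) :
    ∑ G : SimpleGraph V, f G.edgeFinset = ∑ S ∈ (pairsIn univ).powerset, f S := by
  refine sum_bij (fun G _ => G.edgeFinset)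
    (fun G _ => mem_powerset.2 (edgeFinset_subset_pairsIn_univ G))
    (fun G _ G' _ h => edgeFinset_inj.1 h) (fun S hS => ?_) fun _ _ => rfl
  obtain ⟨G, hG⟩ : ∃ G, G = fromEdgeSet (S : Set (Sym2 V)) := ⟨_, rfl⟩
  refine ⟨G, mem_univ _, ?_⟩
  ext e
  have hmem (he : e ∈ S) := mem_powerset.1 hS he
  induction e with | _ a b =>
  rw [mk_mem_pairsIn] at hmem
  simp only [mem_edgeFinset, hG, mem_edgeSet, fromEdgeSet_adj, mem_coe]
  exact ⟨fun h => h.1, fun h => ⟨h, (hmem h).1⟩⟩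

lemma sum_pow_card_edgeFinset (x : ℝ) :
    ∑ G : SimpleGraph V, x ^ #G.edgeFinset = (1 + x) ^ (Fintype.card V).choose 2 := by
  have := sum_pow_mul_eq_add_pow x 1 (pairsIn (univ : Finset V))
  rw [sum_edgeFinset fun S => x ^ #S, ← card_univ, ← card_pairsIn, add_comm, ← this]
  simp only [one_pow, mul_one]

lemma degree_eq_card_inter (G : SimpleGraph V) (v : V) :
    G.degree v = #(G.edgeFinset ∩ pairsBetween {v} (univ \ {v})) := by
  rw [← eBetween_eq_card_inter _ disjoint_sdiff, eBetween_eq_sum, sum_singleton,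
    ← card_neighborFinset_eq_degree]
  congr 1
  ext w
  simpa using fun h => h.ne'

end PairSets

section RandomGraphs

variable {V : Type*} [Fintype V] {p : ℝ} {A B : SimpleGraph V → Prop}

/-- The expectation of `f G` for a random graph `G` on `V` that contains each pair of vertices
independently with probability `p`. -/
noncomputable def graphExp (p : ℝ) (f : SimpleGraph V → ℝ) : ℝ :=
  ∑ G, p ^ #G.edgeFinset * (1 - p) ^ ((Fintype.card V).choose 2 - #G.edgeFinset) * f G

/-- The probability that a random graph on `V` that contains each pair of vertices independently
with probability `p` satisfies `A`. This is the distribution `G(n,p)` on an arbitrary vertex set. -/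
noncomputable def graphProb (p : ℝ) (A : SimpleGraph V → Prop) : ℝ :=
  graphExp p fun G => if A G then 1 else 0

lemma gnpProb_eq_graphProb (n : ℕ) (p : ℝ) (A : SimpleGraph (Fin n) → Prop) :
    gnpProb n p A = graphProb p A := by
  simp only [gnpProb, graphProb, graphExp, gnpWeight, mul_ite, mul_one, mul_zero, Fintype.card_fin]
  congr!

lemma graphProb_eq_graphExp_ite (p : ℝ) (A : SimpleGraph V → Prop) [DecidablePred A] :
    graphProb p A = graphExp p fun G => if A G then 1 else 0 := by
  rw [graphProb]
  congr!

lemma graphExp_edgeFinset (p : ℝ) (f : Finset (Sym2 V) → ℝ) :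
    graphExp p (fun G => f G.edgeFinset) = bernoulliExp p (pairsIn univ) f := by
  have := sum_edgeFinset fun S : Finset (Sym2 V) =>
    p ^ #S * (1 - p) ^ ((Fintype.card V).choose 2 - #S) * f S
  rw [bernoulliExp, card_pairsIn, card_univ, ← this, graphExp]

lemma graphExp_one (p : ℝ) : graphExp p (fun _ : SimpleGraph V => 1) = 1 := by
  rw [graphExp_edgeFinset p fun _ => 1, bernoulliExp_one]

lemma graphExp_add (p : ℝ) (f g : SimpleGraph V → ℝ) :
    graphExp p (fun G => f G + g G) = graphExp p f + graphExp p g := by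
  simp only [graphExp, mul_add, sum_add_distrib]

lemma graphExp_const_mul (p c : ℝ) (f : SimpleGraph V → ℝ) :
    graphExp p (fun G => c * f G) = c * graphExp p f := by
  simp only [graphExp, mul_left_comm _ c, mul_sum]

lemma graphExp_sum {ι : Type*} (p : ℝ) (I : Finset ι) (f : ι → SimpleGraph V → ℝ) :
    graphExp p (fun G => ∑ i ∈ I, f i G) = ∑ i ∈ I, graphExp p (f i) := by
  simp only [graphExp, mul_sum]
  exact sum_comm

lemma graphExp_mono (hp0 : 0 ≤ p) (hp1 : p ≤ 1) {f g : SimpleGraph V → ℝ}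
    (h : ∀ G, f G ≤ g G) : graphExp p f ≤ graphExp p g :=
  sum_le_sum fun G _ => mul_le_mul_of_nonneg_left (h G)
    (mul_nonneg (pow_nonneg hp0 _) (pow_nonneg (sub_nonneg.2 hp1) _))

lemma graphProb_le_graphExp (hp0 : 0 ≤ p) (hp1 : p ≤ 1) {f : SimpleGraph V → ℝ}
    (hf : ∀ G, 0 ≤ f G) (hA : ∀ G, A G → 1 ≤ f G) : graphProb p A ≤ graphExp p f := by
  refine graphExp_mono hp0 hp1 fun G => ?_
  split_ifs with h
  exacts [hA G h, hf G]

lemma graphProb_nonneg (hp0 : 0 ≤ p) (hp1 : p ≤ 1) (A : SimpleGraph V → Prop) :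
    0 ≤ graphProb p A := by
  have := sub_nonneg.2 hp1
  unfold graphProb graphExp
  positivity

lemma graphProb_not (p : ℝ) (A : SimpleGraph V → Prop) :
    graphProb p (fun G => ¬ A G) = 1 - graphProb p A := by
  rw [eq_sub_iff_add_eq, graphProb, graphProb, ← graphExp_add]
  convert graphExp_one (V := V) p with G
  by_cases h : A G <;> simp [h]

lemma graphProb_le_sum (hp0 : 0 ≤ p) (hp1 : p ≤ 1) {ι : Type*} {I : Finset ι}
    {C : ι → SimpleGraph V → Prop} {b : ι → ℝ} (hA : ∀ G, A G → ∃ i ∈ I, C i G)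
    (hC : ∀ i ∈ I, graphProb p (C i) ≤ b i) : graphProb p A ≤ ∑ i ∈ I, b i := by
  refine le_trans ?_ (sum_le_sum hC)
  simp only [graphProb, ← graphExp_sum]
  have hnonneg (G : SimpleGraph V) (i : ι) : 0 ≤ if C i G then (1 : ℝ) else 0 := by
    split_ifs <;> norm_num
  refine graphProb_le_graphExp hp0 hp1 (fun G => sum_nonneg fun i _ => hnonneg G i) fun G hG => ?_
  obtain ⟨i, hi, hCi⟩ := hA G hG
  have := single_le_sum (fun i _ => hnonneg G i) hi
  rwa [if_pos hCi] at this

lemma graphProb_mono (hp0 : 0 ≤ p) (hp1 : p ≤ 1) (h : ∀ G, A G → B G) :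
    graphProb p A ≤ graphProb p B := by
  refine graphProb_le_graphExp hp0 hp1 (fun G => ?_) fun G hG => (if_pos (h G hG)).ge
  split_ifs <;> norm_num

/-- Markov's inequality for `exp (∑ e ∈ E(G), θ e)`, restricted to the graphs containing `R`. -/
lemma graphProb_le_pow_mul_exp_sum (hp0 : 0 ≤ p) (hp1 : p ≤ 1) {R : Finset (Sym2 V)}
    (hR : R ⊆ pairsIn univ) {θ : Sym2 V → ℝ} (hθ : ∀ e ∈ R, θ e = 0) {t : ℝ}
    (hA : ∀ G, A G → R ⊆ G.edgeFinset ∧ t ≤ ∑ e ∈ G.edgeFinset, θ e) :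
    graphProb p A ≤ p ^ #R * Real.exp (-t + ∑ e ∈ pairsIn univ, p * (Real.exp (θ e) - 1)) := by
  have hmarkov : graphProb p A ≤ graphExp p fun G => Real.exp (-t) *
      if R ⊆ G.edgeFinset then Real.exp (∑ e ∈ G.edgeFinset, θ e) else 0 := by
    refine graphProb_le_graphExp hp0 hp1 (fun G => by positivity) fun G hG => ?_
    rw [if_pos (hA G hG).1, ← Real.exp_add]
    exact Real.one_le_exp (by linarith [(hA G hG).2])
  calc graphProb p A ≤ _ := hmarkov
    _ = Real.exp (-t) * _ := by
      rw [graphExp_const_mul, graphExp_edgeFinset p fun S =>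
        if R ⊆ S then Real.exp (∑ e ∈ S, θ e) else 0]
    _ ≤ _ := mul_le_mul_of_nonneg_left (bernoulliExp_exp_sum_le hp0 hp1 hR hθ) (Real.exp_pos _).le
    _ = _ := by rw [Real.exp_add, mul_left_comm]

lemma sum_ite_mem_ite_mem {α : Type*} [DecidableEq α] {F₁ F₂ : Finset α} (h : Disjoint F₁ F₂)
    (E : Finset α) (a b : ℝ) : ∑ e ∈ E, (if e ∈ F₁ then a else if e ∈ F₂ then b else 0) =
      #(E ∩ F₁) * a + #(E ∩ F₂) * b := by
  have hsplit (e : α) : (if e ∈ F₁ then a else if e ∈ F₂ then b else 0) =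
      (if e ∈ F₁ then a else 0) + if e ∈ F₂ then b else 0 := by
    have : e ∈ F₁ → e ∉ F₂ := fun he => Finset.disjoint_left.1 h he
    split_ifs <;> simp_all
  simp only [hsplit, sum_add_distrib, sum_ite_mem, sum_const, nsmul_eq_mul]

lemma graphProb_le_pow_mul_exp (hp0 : 0 ≤ p) (hp1 : p ≤ 1) {R F₁ F₂ : Finset (Sym2 V)}
    (hR : R ⊆ pairsIn univ) (hF₁ : F₁ ⊆ pairsIn univ) (hF₂ : F₂ ⊆ pairsIn univ)
    (hRF₁ : Disjoint R F₁) (hRF₂ : Disjoint R F₂) (hF : Disjoint F₁ F₂) (θ₁ θ₂ : ℝ) {t : ℝ}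
    (hA : ∀ G, A G → R ⊆ G.edgeFinset ∧
      t ≤ θ₁ * #(G.edgeFinset ∩ F₁) + θ₂ * #(G.edgeFinset ∩ F₂)) :
    graphProb p A ≤ p ^ #R * Real.exp
      (-t + (#F₁ * (p * (Real.exp θ₁ - 1)) + #F₂ * (p * (Real.exp θ₂ - 1)))) := by
  have hexp (e : Sym2 V) :
      p * (Real.exp (if e ∈ F₁ then θ₁ else if e ∈ F₂ then θ₂ else 0) - 1) =
        if e ∈ F₁ then p * (Real.exp θ₁ - 1) else if e ∈ F₂ then p * (Real.exp θ₂ - 1) else 0 := by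
    split_ifs <;> simp
  refine (graphProb_le_pow_mul_exp_sum hp0 hp1 hR
    (θ := fun e => if e ∈ F₁ then θ₁ else if e ∈ F₂ then θ₂ else 0) (fun e he => ?_)
    (t := t) fun G hG => ?_).trans_eq ?_
  · simp [Finset.disjoint_left.1 hRF₁ he, Finset.disjoint_left.1 hRF₂ he]
  · rw [sum_ite_mem_ite_mem hF, mul_comm _ θ₁, mul_comm _ θ₂]
    exact hA G hG
  · simp only [hexp, sum_ite_mem_ite_mem hF, inter_eq_right.2 hF₁, inter_eq_right.2 hF₂]

lemma graphProb_le_exp (hp0 : 0 ≤ p) (hp1 : p ≤ 1) {F : Finset (Sym2 V)}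
    (hF : F ⊆ pairsIn univ) (θ : ℝ) {t : ℝ} (hA : ∀ G, A G → t ≤ θ * #(G.edgeFinset ∩ F)) :
    graphProb p A ≤ Real.exp (-t + #F * (p * (Real.exp θ - 1))) := by
  have := graphProb_le_pow_mul_exp hp0 hp1 (empty_subset _) hF (empty_subset _)
    (disjoint_empty_left _) (disjoint_empty_left _) (disjoint_empty_right _) θ 0
    fun G hG => ⟨empty_subset _, (hA G hG).trans_eq (by simp)⟩
  simpa using this

lemma graphProb_degree_le (p : ℝ) (k : ℕ) (v : V) :
    graphProb p (fun G => G.degree v ≤ k) = binomialCDF p (Fintype.card V - 1) k := by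
  have hdisj : Disjoint {v} (univ \ {v}) := disjoint_sdiff
  simp only [graphProb_eq_graphExp_ite, degree_eq_card_inter]
  rw [graphExp_edgeFinset p fun S =>
      if #(S ∩ pairsBetween {v} (univ \ {v})) ≤ k then 1 else 0,
    bernoulliExp_inter p (pairsBetween_subset_univ hdisj) fun S => if #S ≤ k then 1 else 0,
    bernoulliExp_card_le, card_pairsBetween hdisj, card_sdiff_of_subset (subset_univ _)]
  simp

lemma graphExp_indicator_mul_indicator (p : ℝ) (A B : SimpleGraph V → Prop) [DecidablePred A]
    [DecidablePred B] : graphExp p (fun G => (if A G then 1 else 0) * if B G then 1 else 0) =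
      graphProb p fun G => A G ∧ B G := by
  rw [graphProb, graphExp, graphExp]
  refine sum_congr rfl fun G _ => ?_
  by_cases hA : A G <;> by_cases hB : B G <;> simp [hA, hB]

lemma graphProb_degree_le_and_degree_le (hp0 : 0 ≤ p) (hp1 : p ≤ 1) (k : ℕ) {u v : V}
    (huv : u ≠ v) : graphProb p (fun G => G.degree u ≤ k ∧ G.degree v ≤ k) ≤
      binomialCDF p (Fintype.card V - 2) k ^ 2 := by
  set W : Finset V := univ \ {u, v}
  have hstar : ∀ w ∈ ({u, v} : Finset V), Disjoint {w} W ∧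
      #(pairsBetween {w} W) = Fintype.card V - 2 ∧ ∀ G : SimpleGraph V,
        #(G.edgeFinset ∩ pairsBetween {w} W) ≤ G.degree w := by
    intro w hw
    have hdisj : Disjoint {w} W := disjoint_sdiff.mono_left (singleton_subset_iff.2 hw)
    refine ⟨hdisj, ?_, fun G => ?_⟩
    · rw [card_pairsBetween hdisj, card_singleton, one_mul, card_sdiff_of_subset (subset_univ _),
        card_univ, card_pair huv]
    · rw [degree_eq_card_inter]
      exact card_le_card <| inter_subset_inter_left <| image_subset_image <|
        product_subset_product_right <| sdiff_subset_sdiff subset_rfl <| singleton_subset_iff.2 hw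
  obtain ⟨hdu, hcu, hu⟩ := hstar u (by simp)
  obtain ⟨hdv, hcv, hv⟩ := hstar v (by simp)
  refine (graphProb_mono hp0 hp1 (B := fun G => #(G.edgeFinset ∩ pairsBetween {u} W) ≤ k ∧
    #(G.edgeFinset ∩ pairsBetween {v} W) ≤ k)
    fun G hG => ⟨(hu G).trans hG.1, (hv G).trans hG.2⟩).trans_eq ?_
  have hindep := bernoulliExp_inter_mul_inter p
    (disjoint_pairsBetween_singleton huv (B := W) (C := W) (by simp [W]))
    (pairsBetween_subset_univ hdu) (pairsBetween_subset_univ hdv)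
    (fun S => if #S ≤ k then 1 else 0) fun S => if #S ≤ k then 1 else 0
  rw [bernoulliExp_card_le, bernoulliExp_card_le, hcu, hcv, ← sq, ← graphExp_edgeFinset] at hindep
  rw [← hindep, graphExp_indicator_mul_indicator]

lemma graphExp_sq_card_le {C : V → SimpleGraph V → Prop} {a b : ℝ}
    (hb : 0 ≤ b) (hC : ∀ v, graphProb p (C v) = a)
    (hCC : ∀ u v, u ≠ v → graphProb p (fun G => C u G ∧ C v G) ≤ b) :
    graphExp p (fun G => (#{v | C v G} : ℝ) ^ 2) ≤
      Fintype.card V * (a + Fintype.card V * b) := by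
  have hrow (u : V) : ∑ v, graphProb p (fun G => C u G ∧ C v G) ≤ a + Fintype.card V * b := calc
    _ = a + ∑ v ∈ univ.erase u, graphProb p (fun G => C u G ∧ C v G) := by
      rw [← add_sum_erase _ _ (mem_univ u)]
      simp only [and_self, hC]
    _ ≤ a + ∑ _v ∈ univ.erase u, b := by
      gcongr with v hv
      exact hCC u v (ne_of_mem_erase hv).symm
    _ ≤ _ := by
      rw [sum_const, nsmul_eq_mul]
      gcongr
      exact card_erase_le
  calc graphExp p (fun G => (#{v | C v G} : ℝ) ^ 2)
    _ = ∑ u, ∑ v, graphProb p (fun G => C u G ∧ C v G) := by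
      simp only [← graphExp_indicator_mul_indicator, ← graphExp_sum, ← sum_mul_sum, ← sq, sum_boole]
    _ ≤ ∑ _u : V, (a + Fintype.card V * b) := sum_le_sum fun u _ => hrow u
    _ = _ := by rw [sum_const, nsmul_eq_mul, card_univ]

/-- The second moment method for the number of `v` with the property `C v`. -/
lemma graphProb_not_exists_le [Nonempty V] (hp0 : 0 ≤ p) (hp1 : p ≤ 1)
    {C : V → SimpleGraph V → Prop} {a c : ℝ} (ha : 0 < a) (hc : 0 ≤ c)
    (hC : ∀ v, graphProb p (C v) = a)
    (hCC : ∀ u v, u ≠ v → graphProb p (fun G => C u G ∧ C v G) ≤ c * a ^ 2) :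
    graphProb p (fun G => ¬ ∃ v, C v G) ≤ 1 / (Fintype.card V * a) + (c - 1) := by
  set n := Fintype.card V
  have hn : (0 : ℝ) < n := Nat.cast_pos.2 Fintype.card_pos
  have hfirst : graphExp p (fun G => (#{v | C v G} : ℝ)) = n * a := by
    have hC' (v : V) : (graphExp p fun G => if C v G then 1 else 0) = a := hC v
    simp only [← sum_boole, graphExp_sum, hC', sum_const, nsmul_eq_mul, card_univ, n]
  have hsecond := graphExp_sq_card_le (by positivity) hC hCC
  calc graphProb p (fun G => ¬ ∃ v, C v G)
    _ ≤ graphExp p fun G => (1 - (#{v | C v G} : ℝ) / (n * a)) ^ 2 := by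
      refine graphProb_le_graphExp hp0 hp1 (fun G => sq_nonneg _) fun G hG => ?_
      rw [not_exists] at hG
      simp [hG]
    _ = graphExp p fun G => 1 + (-2 / (n * a) * #{v | C v G} +
          1 / (n * a) ^ 2 * (#{v | C v G} : ℝ) ^ 2) := by
      congr with G
      field_simp
      ring
    _ = 1 + (-2 / (n * a) * (n * a) + 1 / (n * a) ^ 2 *
          graphExp p fun G => (#{v | C v G} : ℝ) ^ 2) := by
      rw [graphExp_add, graphExp_add, graphExp_const_mul, graphExp_const_mul, graphExp_one, hfirst]
    _ ≤ 1 + (-2 / (n * a) * (n * a) + 1 / (n * a) ^ 2 * (n * (a + n * (c * a ^ 2)))) := by gcongr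
    _ = _ := by
      field_simp
      ring

end RandomGraphs

/-! ### Failure probabilities -/

lemma cast_choose_two_le (s : ℕ) : (s.choose 2 : ℝ) ≤ s ^ 2 / 2 := by
  rw [Nat.cast_choose_two]
  nlinarith [Nat.cast_nonneg (α := ℝ) s]

lemma exp_neg_nat_le_pow (k : ℕ) : Real.exp (-k) ≤ 0.37 ^ k := by
  have hexp : Real.exp (-1) ≤ 0.37 := by
    rw [Real.exp_neg, inv_le_comm₀ (Real.exp_pos _) (by norm_num)]
    linarith [Real.exp_one_gt_d9]
  rw [← mul_neg_one, Real.exp_nat_mul]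
  gcongr

/-- The edge probability `p` is close to the threshold `(log n + log (log n)) / n` for the
Hamiltonicity of `G(n, p)`, and `n` is large. The parameter `L` stands for `log n`. -/
structure NearThreshold (n : ℕ) (p L : ℝ) : Prop where
  exp_eq : Real.exp L = n
  le_log : 1000 ≤ L
  le_mean : L ≤ n * p
  mean_le : n * p ≤ 1.02 * L
  sq_le : 100 * L ^ 2 ≤ n

namespace NearThreshold

variable {n : ℕ} {p L : ℝ}

lemma log_le (h : NearThreshold n p L) : 100 * L ≤ n := by
  nlinarith [h.le_log, h.sq_le]

lemma le_card (h : NearThreshold n p L) : (100 : ℝ) ≤ n := by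
  linarith [h.le_log, h.log_le]

lemma pos (h : NearThreshold n p L) : 0 < p :=
  pos_of_mul_pos_right (by linarith [h.le_log, h.le_mean]) n.cast_nonneg

lemma mean_le_two_mul (h : NearThreshold n p L) : n * p ≤ 2 * L := by
  linarith [h.le_log, h.mean_le]

lemma mul_log_le (h : NearThreshold n p L) : p * L ≤ 0.02 := by
  have hn := h.le_card
  have hmul : n * p * L ≤ 1.02 * L * L :=
    mul_le_mul_of_nonneg_right h.mean_le (by linarith [h.le_log])
  have : n * (p * L) ≤ n * 0.02 := by nlinarith [h.sq_le]
  exact le_of_mul_le_mul_left this (by linarith)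

lemma le_hundredth (h : NearThreshold n p L) : p ≤ 0.01 := by
  nlinarith [h.pos, h.le_log, h.mul_log_le]

lemma le_one (h : NearThreshold n p L) : p ≤ 1 :=
  h.le_hundredth.trans (by norm_num)

end NearThreshold

section FailureProbabilities

variable {V : Type*} [Fintype V] {p L σ : ℝ}

lemma graphProb_le_eIn (hp0 : 0 ≤ p) (hp1 : p ≤ 1) (S : Finset V) {θ : ℝ} (hθ : 0 ≤ θ) (t : ℝ) :
    graphProb p (fun G => t ≤ eIn G S) ≤
      Real.exp (-(θ * t) + (#S).choose 2 * (p * (Real.exp θ - 1))) := by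
  rw [← card_pairsIn]
  refine graphProb_le_exp hp0 hp1 (pairsIn_subset_univ S) θ fun G hG => ?_
  rw [← eIn_eq_card_inter]
  gcongr

lemma graphProb_eBetween_le (hp0 : 0 ≤ p) (hp1 : p ≤ 1) {U W : Finset V} (h : Disjoint U W)
    {θ : ℝ} (hθ : 0 ≤ θ) (t : ℝ) : graphProb p (fun G => (eBetween G U W : ℝ) ≤ t) ≤
      Real.exp (θ * t + #U * #W * (p * (Real.exp (-θ) - 1))) := by
  rw [← Nat.cast_mul, ← card_pairsBetween h]
  refine (graphProb_le_exp hp0 hp1 (pairsBetween_subset_univ h) (-θ) (t := -(θ * t))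
    fun G hG => ?_).trans_eq (by rw [neg_neg])
  rw [← eBetween_eq_card_inter G h, neg_mul, neg_le_neg_iff]
  gcongr

lemma sum_pow_card_le {x : ℝ} (hx0 : 0 ≤ x) (hx : Fintype.card V * x ≤ 1) :
    ∑ S : Finset V, x ^ #S ≤ 3 := calc
  _ = (x + 1) ^ Fintype.card V := by
    simpa only [one_pow, mul_one] using Fintype.sum_pow_mul_eq_add_pow V x 1
  _ ≤ Real.exp x ^ Fintype.card V := by
    gcongr
    exact Real.add_one_le_exp x
  _ = Real.exp (Fintype.card V * x) := (Real.exp_nat_mul _ _).symm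
  _ ≤ Real.exp 1 := Real.exp_le_exp.2 hx
  _ ≤ 3 := by linarith [Real.exp_one_lt_d9]

lemma graphProb_le_mul_three (hp0 : 0 ≤ p) (hp1 : p ≤ 1) {A : SimpleGraph V → Prop}
    {P : Finset V → Prop} {C : Finset V → SimpleGraph V → Prop} {b x : ℝ} (hb : 0 ≤ b)
    (hx0 : 0 ≤ x) (hx : Fintype.card V * x ≤ 1) (hA : ∀ G, A G → ∃ S, P S ∧ C S G)
    (hC : ∀ S, P S → graphProb p (C S) ≤ b * x ^ #S) : graphProb p A ≤ b * 3 := by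
  refine (graphProb_le_sum (I := univ.filter P) hp0 hp1 (fun G hG => ?_)
    fun S hS => hC S (mem_filter.1 hS).2).trans ?_
  · obtain ⟨S, hS, hSG⟩ := hA G hG
    exact ⟨S, by simpa using hS, hSG⟩
  · rw [← mul_sum]
    gcongr
    refine le_trans (sum_le_sum_of_subset_of_nonneg (subset_univ _) fun _ _ _ => ?_)
      (sum_pow_card_le hx0 hx)
    positivity

namespace NearThreshold

lemma graphProb_card_edgeFinset_gt_le (h : NearThreshold (Fintype.card V) p L) :
    graphProb p (fun G : SimpleGraph V => ¬ (#G.edgeFinset : ℝ) ≤ Fintype.card V * L) ≤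
      Real.exp (-(0.1 * L)) := by
  set n := Fintype.card V with hn
  have hp0 := h.pos.le
  refine (graphProb_mono hp0 h.le_one (B := fun G => n * L ≤ eIn G univ) fun G hG => ?_).trans <|
    (graphProb_le_eIn hp0 h.le_one univ zero_le_one _).trans (Real.exp_le_exp.2 ?_)
  · simpa [eIn] using (not_le.1 hG).le
  have hexp : Real.exp 1 - 1 ≤ 1.72 := by linarith [Real.exp_one_lt_d9]
  have hmean : (n.choose 2 : ℝ) * (p * (Real.exp 1 - 1)) ≤ 0.86 * (n * (1.02 * L)) := calc
    _ ≤ n ^ 2 / 2 * (p * 1.72) := by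
      have := mul_nonneg hp0 (sub_nonneg.2 (Real.one_le_exp zero_le_one))
      gcongr
      exact cast_choose_two_le n
    _ = 0.86 * (n * (n * p)) := by ring
    _ ≤ 0.86 * (n * (1.02 * L)) := by
      have := h.mean_le
      gcongr
  have : 100 * L ≤ n * L := by
    gcongr
    · linarith [h.le_log]
    · exact h.le_card
  rw [card_univ, ← hn]
  linarith [h.le_log]

lemma graphProb_eBetween_large_le (h : NearThreshold (Fintype.card V) p L) (hσ : 0 < σ)
    (hL : 150 / σ ≤ L) {U W : Finset V} (hdisj : Disjoint U W)
    (hU : σ / 4 * Fintype.card V ≤ #U) (hW : (Fintype.card V : ℝ) / 4 ≤ #W) :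
    graphProb p (fun G => (eBetween G U W : ℝ) ≤ #U * L / 16) ≤
      Real.exp (-(3 * Fintype.card V)) := by
  set n := Fintype.card V
  have hp := h.pos
  refine (graphProb_eBetween_le hp.le h.le_one hdisj zero_le_one _).trans
    (Real.exp_le_exp.2 ?_)
  have hexp : Real.exp (-1) ≤ 0.37 := by simpa using exp_neg_nat_le_pow 1
  have hmean : L / 4 ≤ #W * p := calc
    L / 4 ≤ n / 4 * p := by linarith [h.le_mean]
    _ ≤ #W * p := by gcongr
  have hmany : 37.5 * n ≤ L * #U := calc
    37.5 * n = 150 / σ * (σ / 4 * n) := by field_simp; ring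
    _ ≤ L * #U := by
      gcongr
      linarith [h.le_log]
  have : (#U : ℝ) * (L / 4) * 0.63 ≤ #U * (#W * p) * (1 - Real.exp (-1)) := by
    gcongr
    linarith
  linarith

lemma graphProb_not_largePairsDense_le (h : NearThreshold (Fintype.card V) p L) (hσ : 0 < σ)
    (hL : 150 / σ ≤ L) :
    graphProb p (fun G : SimpleGraph V => ¬ LargePairsDense G L σ) ≤ Real.exp (-L) := by
  set n := Fintype.card V
  have hpair : ∀ x ∈ ({x | Disjoint x.1 x.2 ∧ σ / 4 * n ≤ #x.1 ∧ (n : ℝ) / 4 ≤ #x.2} :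
      Finset (Finset V × Finset V)),
      graphProb p (fun G => (eBetween G x.1 x.2 : ℝ) ≤ #x.1 * L / 16) ≤ Real.exp (-(3 * n)) := by
    intro x hx
    obtain ⟨hdisj, hU, hW⟩ := (mem_filter.1 hx).2
    exact h.graphProb_eBetween_large_le hσ hL hdisj hU hW
  refine (graphProb_le_sum h.pos.le h.le_one (fun G hG => ?_) hpair).trans ?_
  · simp only [LargePairsDense, not_forall, not_le] at hG
    obtain ⟨U, W, hdisj, hU, hW, hlt⟩ := hG
    exact ⟨(U, W), mem_filter.2 ⟨mem_univ _, hdisj, hU, hW⟩, hlt.le⟩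
  have hcard : Fintype.card (Finset V × Finset V) = (2 * 2) ^ n := by
    rw [Fintype.card_prod, Fintype.card_finset, ← mul_pow]
  have hexp : (4 : ℝ) ≤ Real.exp 2 := by
    have : Real.exp 2 = Real.exp 1 ^ 2 := by simp [← Real.exp_nat_mul]
    nlinarith [Real.exp_one_gt_d9]
  rw [sum_const, nsmul_eq_mul]
  calc _ ≤ (((2 * 2) ^ n : ℕ) : ℝ) * Real.exp (-(3 * n)) := by
        gcongr
        exact hcard ▸ card_le_univ _
    _ ≤ Real.exp 2 ^ n * Real.exp (-(3 * n)) := by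
        push_cast
        gcongr
    _ = Real.exp (-n) := by
        rw [← Real.exp_nat_mul, ← Real.exp_add]
        ring_nf
    _ ≤ Real.exp (-L) := Real.exp_le_exp.2 (by linarith [h.log_le, h.le_log])

lemma graphProb_not_smallSetsSparse_le (h : NearThreshold (Fintype.card V) p L) :
    graphProb p (fun G : SimpleGraph V => ¬ SmallSetsSparse G L (Real.exp (-56160))) ≤
      Real.exp (-L) * 3 := by
  set n := Fintype.card V
  have hL := h.le_log
  have hp := h.pos
  refine graphProb_le_mul_three hp.le h.le_one
    (P := fun S => S.Nonempty ∧ (#S : ℝ) ≤ Real.exp (-56160) * n)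
    (C := fun S G => L * #S / 16000 ≤ eIn G S) (x := Real.exp (-2 * L)) (Real.exp_pos _).le
    (Real.exp_pos _).le ?_ (fun G hG => ?_) fun S ⟨hS, hSn⟩ => ?_
  · rw [← h.exp_eq, ← Real.exp_add, Real.exp_le_one_iff]
    linarith
  · simp only [SmallSetsSparse, not_forall, not_lt] at hG
    obtain ⟨S, hS, hSn, hle⟩ := hG
    exact ⟨S, ⟨hS, hSn⟩, hle⟩
  -- As `56160 / 16000 = 3 + 0.51`, the bound beats both the mean, at most `0.51 * L * #S`, and the
  -- number of sets.
  refine (graphProb_le_eIn hp.le h.le_one S (θ := 56160) (by norm_num) _).trans ?_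
  rw [← Real.exp_nat_mul, ← Real.exp_add]
  refine Real.exp_le_exp.2 ?_
  have hS' : (#S : ℝ) * Real.exp 56160 ≤ n := by
    rwa [Real.exp_neg, inv_mul_eq_div, le_div_iff₀ (Real.exp_pos _)] at hSn
  have hmean : ((#S).choose 2 : ℝ) * (p * (Real.exp 56160 - 1)) ≤ #S / 2 * (1.02 * L) := calc
    _ ≤ (#S : ℝ) ^ 2 / 2 * (p * Real.exp 56160) := by
      have := mul_nonneg hp.le (sub_nonneg.2 (Real.one_le_exp (x := 56160) (by norm_num)))
      gcongr
      · exact cast_choose_two_le _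
      · linarith
    _ = #S / 2 * (#S * Real.exp 56160 * p) := by ring
    _ ≤ #S / 2 * (n * p) := by gcongr
    _ ≤ _ := mul_le_mul_of_nonneg_left h.mean_le (by positivity)
  have : L ≤ L * #S := le_mul_of_one_le_right (by linarith) (by exact_mod_cast hS.card_pos)
  linarith

lemma graphProb_not_fiveSetsSparse_le (h : NearThreshold (Fintype.card V) p L) :
    graphProb p (fun G : SimpleGraph V => ¬ FiveSetsSparse G) ≤
      Real.exp 10 * (2 * L) ^ 6 * Real.exp (-L) * 3 := by
  set n := Fintype.card V
  have hL := h.le_log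
  have hp := h.pos
  have hn0 : (0 : ℝ) < n := by linarith [h.le_card]
  refine graphProb_le_mul_three hp.le h.le_one (P := fun S => #S = 5)
    (C := fun S G => (6 : ℝ) ≤ eIn G S) (x := (n : ℝ)⁻¹) (by positivity) (by positivity)
    (mul_inv_cancel₀ hn0.ne').le (fun G hG => ?_) fun S hS => ?_
  · simp only [FiveSetsSparse, not_forall, not_le] at hG
    obtain ⟨S, hS, hlt⟩ := hG
    exact ⟨S, hS, by exact_mod_cast hlt⟩
  have hlog : Real.log p ≤ 0 := Real.log_nonpos hp.le h.le_one
  have hchoose : Nat.choose 5 2 = 10 := rfl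
  have hmean : p * (p⁻¹ - 1) ≤ 1 := by
    rw [mul_sub, mul_inv_cancel₀ hp.ne']
    linarith
  calc graphProb p (fun G => (6 : ℝ) ≤ eIn G S)
    _ ≤ Real.exp (-(-Real.log p * 6) + Nat.choose 5 2 * (p * (p⁻¹ - 1))) := by
      have := graphProb_le_eIn hp.le h.le_one S (neg_nonneg.2 hlog) 6
      rwa [hS, Real.exp_neg, Real.exp_log hp] at this
    _ ≤ Real.exp (10 + (6 : ℕ) * Real.log p) := by
      rw [hchoose]
      push_cast
      exact Real.exp_le_exp.2 (by linarith)
    _ = Real.exp 10 * (n * p) ^ 6 * (n : ℝ)⁻¹ * (n : ℝ)⁻¹ ^ 5 := by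
      rw [Real.exp_add, Real.exp_nat_mul, Real.exp_log hp]
      field_simp
    _ ≤ Real.exp 10 * (2 * L) ^ 6 * (n : ℝ)⁻¹ * (n : ℝ)⁻¹ ^ 5 := by
      have := h.mean_le_two_mul
      gcongr
    _ = _ := by rw [Real.exp_neg, h.exp_eq, hS]

lemma card_pairsBetween_pair_compl_mul_le (h : NearThreshold (Fintype.card V) p L) {S : Finset V}
    (hS : #S ≤ 5) {x y : V} (hxy : x ≠ y) (hdisj : Disjoint {x, y} (univ \ S)) :
    (#(pairsBetween {x, y} (univ \ S)) : ℝ) * (p * (Real.exp (-2) - 1)) ≤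
      -(0.86 * (2 * L - 10 * p)) := by
  set n := Fintype.card V with hn
  have hp := h.pos
  have hcard : 2 * (n : ℝ) - 10 ≤ #(pairsBetween {x, y} (univ \ S)) := by
    rw [card_pairsBetween hdisj, card_pair hxy, card_sdiff_of_subset (subset_univ S), card_univ,
      ← hn, Nat.cast_mul, Nat.cast_two, Nat.cast_sub (card_le_univ S)]
    have : (#S : ℝ) ≤ 5 := by exact_mod_cast hS
    linarith
  have hexp : Real.exp (-2) ≤ 0.37 ^ 2 := exp_neg_nat_le_pow 2
  have : (2 * (n : ℝ) - 10) * p * 0.86 ≤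
      #(pairsBetween {x, y} (univ \ S)) * p * (1 - Real.exp (-2)) := by
    gcongr
    linarith
  linarith [h.le_mean]

lemma graphProb_lowDegree_pair_le (h : NearThreshold (Fintype.card V) p L) {S : Finset V}
    (hS : #S ≤ 5) {x y : V} (hx : x ∈ S) (hy : y ∈ S) (hxy : x ≠ y) :
    graphProb p (fun G => #S ≤ eIn G S + 1 ∧ (G.degree x : ℝ) ≤ 0.1 * L ∧
      (G.degree y : ℝ) ≤ 0.1 * L) ≤ Real.exp (20 - 1.3 * L + (#S - 1 : ℕ) * Real.log p) := by
  have hp := h.pos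
  have hlog : 0 ≤ -Real.log p := neg_nonneg.2 (Real.log_nonpos hp.le h.le_one)
  have hdisj : Disjoint {x, y} (univ \ S) :=
    disjoint_sdiff.mono_left (insert_subset hx (singleton_subset_iff.2 hy))
  refine (graphProb_le_pow_mul_exp hp.le h.le_one (empty_subset _) (pairsIn_subset_univ S)
    (pairsBetween_subset_univ hdisj) (disjoint_empty_left _) (disjoint_empty_left _)
    (disjoint_pairsIn_pairsBetween S {x, y}) (-Real.log p) (-2)
    (t := -Real.log p * (#S - 1 : ℕ) - 0.4 * L) fun G hG => ?_).trans ?_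
  · obtain ⟨hedges, hdx, hdy⟩ := hG
    refine ⟨empty_subset _, ?_⟩
    rw [← eIn_eq_card_inter, ← eBetween_eq_card_inter G hdisj]
    have hin : -Real.log p * (#S - 1 : ℕ) ≤ -Real.log p * eIn G S :=
      mul_le_mul_of_nonneg_left (Nat.cast_le.2 (by omega)) hlog
    have hdeg : (eBetween G {x, y} (univ \ S) : ℝ) ≤ G.degree x + G.degree y := by
      have := eBetween_le_sum_degree G {x, y} (univ \ S)
      rw [sum_pair hxy] at this
      exact_mod_cast this
    linarith
  have hin : (#(pairsIn S) : ℝ) * (p * (p⁻¹ - 1)) ≤ 13 := by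
    have hcard : (#(pairsIn S) : ℝ) ≤ 13 := by
      have : (#S : ℝ) ≤ 5 := by exact_mod_cast hS
      rw [card_pairsIn]
      nlinarith [cast_choose_two_le #S]
    rw [mul_sub, mul_inv_cancel₀ hp.ne', mul_one]
    nlinarith
  have hout := h.card_pairsBetween_pair_compl_mul_le hS hxy hdisj
  rw [card_empty, pow_zero, one_mul, Real.exp_neg (Real.log p), Real.exp_log hp]
  exact Real.exp_le_exp.2 (by linarith [h.le_hundredth, h.le_log])

lemma exp_add_mul_log_le (h : NearThreshold n p L) {s : ℕ} (hs : 1 ≤ s) (hs' : s ≤ 5) :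
    Real.exp (20 - 1.3 * L + (s - 1 : ℕ) * Real.log p) ≤
      Real.exp 20 * (2 * L) ^ 4 * Real.exp (-(0.3 * L)) * (n : ℝ)⁻¹ ^ s := by
  have hp := h.pos
  have hL := h.le_log
  have hn : (0 : ℝ) < n := by linarith [h.le_card]
  obtain ⟨k, rfl⟩ := Nat.exists_eq_add_of_le' hs
  have hpow : (n * p) ^ k ≤ (2 * L) ^ 4 := calc
    _ ≤ (2 * L) ^ k := pow_le_pow_left₀ (by positivity) h.mean_le_two_mul k
    _ ≤ _ := pow_le_pow_right₀ (by linarith) (by omega)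
  calc Real.exp (20 - 1.3 * L + (k + 1 - 1 : ℕ) * Real.log p)
    _ = Real.exp 20 * Real.exp (-(0.3 * L)) * (Real.exp (-L) * p ^ k) := by
      rw [← Real.exp_log hp, ← Real.exp_nat_mul, ← Real.exp_add, ← Real.exp_add, ← Real.exp_add,
        Real.log_exp, Nat.add_sub_cancel]
      ring_nf
    _ = Real.exp 20 * (n * p) ^ k * Real.exp (-(0.3 * L)) * (n : ℝ)⁻¹ ^ (k + 1) := by
      rw [Real.exp_neg L, h.exp_eq, pow_succ, mul_pow, inv_pow]
      field_simp
    _ ≤ _ := by gcongr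

lemma graphProb_not_lowDegreesScattered_le (h : NearThreshold (Fintype.card V) p L) :
    graphProb p (fun G : SimpleGraph V => ¬ LowDegreesScattered G L) ≤
      25 * (Real.exp 20 * (2 * L) ^ 4 * Real.exp (-(0.3 * L))) * 3 := by
  have hp := h.pos
  have hL := h.le_log
  have hn : (0 : ℝ) < Fintype.card V := by linarith [h.le_card]
  refine graphProb_le_mul_three hp.le h.le_one (P := fun S => #S ≤ 5)
    (C := fun S G => ∃ z ∈ S.offDiag, #S ≤ eIn G S + 1 ∧ (G.degree z.1 : ℝ) ≤ 0.1 * L ∧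
      (G.degree z.2 : ℝ) ≤ 0.1 * L) (x := (Fintype.card V : ℝ)⁻¹) (by positivity) (by positivity)
    (mul_inv_cancel₀ hn.ne').le (fun G hG => ?_) fun S hS => ?_
  · simp only [LowDegreesScattered, not_forall, not_or, not_le] at hG
    obtain ⟨S, hS, x, hx, y, hy, hxy, hedges, hdx, hdy⟩ := hG
    exact ⟨S, hS, (x, y), mem_offDiag.2 ⟨hx, hy, hxy⟩, hedges, hdx.le, hdy.le⟩
  refine (graphProb_le_sum (b := fun _ => Real.exp 20 * (2 * L) ^ 4 * Real.exp (-(0.3 * L)) *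
    (Fintype.card V : ℝ)⁻¹ ^ #S) hp.le h.le_one (fun G hG => hG) fun z hz => ?_).trans ?_
  · obtain ⟨hx, hy, hxy⟩ := mem_offDiag.1 hz
    exact (h.graphProb_lowDegree_pair_le hS hx hy hxy).trans
      (h.exp_add_mul_log_le (card_pos.2 ⟨_, hx⟩) hS)
  · have hcard : #S.offDiag ≤ 25 := by
      rw [offDiag_card]
      exact (Nat.sub_le _ _).trans (Nat.mul_le_mul hS hS)
    rw [sum_const, nsmul_eq_mul, mul_assoc 25]
    gcongr
    exact_mod_cast hcard

lemma graphProb_boosterPoor_le (h : NearThreshold (Fintype.card V) p L) {Γ : SimpleGraph V}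
    (hΓ : (#Γ.edgeFinset : ℝ) ≤ 0.001 * Fintype.card V * L)
    (hB : (Fintype.card V : ℝ) ^ 2 / 32 ≤ #(boosterGraph Γ).edgeFinset) :
    graphProb p (fun G => Γ ≤ G ∧
      (#(G.edgeFinset ∩ (boosterGraph Γ).edgeFinset) : ℝ) ≤ 0.005 * Fintype.card V * L) ≤
      Real.exp (-(0.012 * (Fintype.card V * L))) * (p * Real.exp (-4)) ^ #Γ.edgeFinset := by
  set n := Fintype.card V
  have hp := h.pos
  refine (graphProb_le_pow_mul_exp hp.le h.le_one (edgeFinset_subset_pairsIn_univ Γ)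
    (edgeFinset_subset_pairsIn_univ (boosterGraph Γ)) (empty_subset _)
    (disjoint_edgeFinset.2 (disjoint_boosterGraph Γ)) (disjoint_empty_right _)
    (disjoint_empty_right _) (-2) 0 (t := -(0.01 * (n * L))) fun G hG =>
      ⟨edgeFinset_subset_edgeFinset.2 hG.1, by linarith [hG.2]⟩).trans ?_
  have hexp : Real.exp (-2) ≤ 0.37 ^ 2 := exp_neg_nat_le_pow 2
  have hmean : (n : ℝ) ^ 2 / 32 * (p * 0.86) ≤
      #(boosterGraph Γ).edgeFinset * (p * (1 - Real.exp (-2))) := by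
    gcongr
    linarith
  have : n * L ≤ n * (n * p) := by
    gcongr
    exact h.le_mean
  rw [mul_pow, ← Real.exp_nat_mul, mul_left_comm (Real.exp _), ← Real.exp_add]
  refine mul_le_mul_of_nonneg_left (Real.exp_le_exp.2 ?_) (by positivity)
  simp only [card_empty, Nat.cast_zero, zero_mul, add_zero]
  linarith

lemma sum_mul_exp_pow_card_edgeFinset_le (h : NearThreshold (Fintype.card V) p L) :
    ∑ Γ : SimpleGraph V, (p * Real.exp (-4)) ^ #Γ.edgeFinset ≤
      Real.exp (0.0101 * (Fintype.card V * L)) := by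
  set n := Fintype.card V
  have hp := h.pos
  have hexp : Real.exp (-4) ≤ 0.37 ^ 4 := exp_neg_nat_le_pow 4
  calc _ = (p * Real.exp (-4) + 1) ^ n.choose 2 := by rw [sum_pow_card_edgeFinset, add_comm]
    _ ≤ Real.exp (p * Real.exp (-4)) ^ n.choose 2 := by
      gcongr
      exact Real.add_one_le_exp _
    _ = Real.exp (n.choose 2 * (p * Real.exp (-4))) := (Real.exp_nat_mul _ _).symm
    _ ≤ Real.exp (n ^ 2 / 2 * (p * 0.37 ^ 4)) := by
      gcongr
      exact cast_choose_two_le n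
    _ ≤ _ := by
      have := mul_le_mul_of_nonneg_left h.mean_le n.cast_nonneg
      exact Real.exp_le_exp.2 (by nlinarith)

lemma graphProb_not_boosterRich_le (h : NearThreshold (Fintype.card V) p L) :
    graphProb p (fun G : SimpleGraph V => ¬ BoosterRich G L) ≤ Real.exp (-(0.1 * L)) := by
  set n := Fintype.card V
  have hp := h.pos
  refine (graphProb_le_sum hp.le h.le_one (I := univ.filter fun Γ : SimpleGraph V =>
    (#Γ.edgeFinset : ℝ) ≤ 0.001 * n * L ∧ (n : ℝ) ^ 2 / 32 ≤ #(boosterGraph Γ).edgeFinset)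
    (fun G hG => ?_) fun Γ hΓ => h.graphProb_boosterPoor_le (mem_filter.1 hΓ).2.1
      (mem_filter.1 hΓ).2.2).trans ?_
  · simp only [BoosterRich, not_forall, not_lt] at hG
    obtain ⟨Γ, hΓG, hΓ, hB, hle⟩ := hG
    exact ⟨Γ, mem_filter.2 ⟨mem_univ _, hΓ, hB⟩, hΓG, hle⟩
  have hmul : 100 * L ≤ n * L := by
    gcongr
    · linarith [h.le_log]
    · exact h.le_card
  rw [← mul_sum]
  calc _ ≤ Real.exp (-(0.012 * (n * L))) * Real.exp (0.0101 * (n * L)) := by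
        gcongr
        refine (sum_le_sum_of_subset_of_nonneg (filter_subset _ _) fun _ _ _ => ?_).trans
          h.sum_mul_exp_pow_card_edgeFinset_le
        positivity
    _ ≤ _ := by
        rw [← Real.exp_add]
        exact Real.exp_le_exp.2 (by linarith [h.le_log])

lemma graphProb_not_two_le_degree_le (h : NearThreshold (Fintype.card V) p L) :
    graphProb p (fun G : SimpleGraph V => ¬ ∀ v, 2 ≤ G.degree v) ≤
      Real.exp (3 + L + Real.log L - Fintype.card V * p) := by
  set n := Fintype.card V
  have hp := h.pos
  have hL := h.le_log
  have hvertex (v : V) : graphProb p (fun G => G.degree v ≤ 1) ≤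
      Real.exp (3 + Real.log L - n * p) := by
    have hdisj : Disjoint {v} (univ \ {v}) := disjoint_sdiff
    refine (graphProb_mono hp.le h.le_one
      (B := fun G => (eBetween G {v} (univ \ {v}) : ℝ) ≤ 1) fun G hG => ?_).trans <|
      (graphProb_eBetween_le hp.le h.le_one hdisj
        (Real.log_nonneg (by linarith : (1 : ℝ) ≤ L)) 1).trans (Real.exp_le_exp.2 ?_)
    · rw [eBetween_eq_card_inter G hdisj, ← degree_eq_card_inter]
      exact_mod_cast hG
    have hcard : (#(univ \ {v}) : ℝ) = n - 1 := by
      rw [card_sdiff_of_subset (subset_univ _), card_singleton, card_univ,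
        Nat.cast_sub (Fintype.card_pos_iff.2 ⟨v⟩), Nat.cast_one]
    have hmean : n * p * L⁻¹ ≤ 1.02 := by
      rw [← div_eq_mul_inv, div_le_iff₀ (by linarith)]
      exact h.mean_le
    have : 0 ≤ p * L⁻¹ := by positivity
    rw [hcard, card_singleton, Real.exp_neg, Real.exp_log (by linarith)]
    linarith [h.le_one]
  refine (graphProb_le_sum (I := univ) hp.le h.le_one (fun G hG => ?_)
    fun v _ => hvertex v).trans_eq ?_
  · simp only [not_forall, not_le] at hG
    obtain ⟨v, hv⟩ := hG
    exact ⟨v, mem_univ v, by omega⟩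
  · rw [sum_const, nsmul_eq_mul, card_univ, ← h.exp_eq, ← Real.exp_add, h.exp_eq]
    ring_nf

end NearThreshold

end FailureProbabilities

section MinDegree

variable {p L : ℝ}

lemma pow_mul_pow_le_binomialCDF (hp0 : 0 ≤ p) (hp1 : p ≤ 1) {N k : ℕ} {r : ℝ} (hr : 0 ≤ r)
    (h : k * r ≤ (N + 1 - k : ℕ) * p) : r ^ k * (1 - p) ^ (N - k) ≤ binomialCDF p N k := by
  have := sub_nonneg.2 hp1
  have hchoose : ((N + 1 - k : ℕ) : ℝ) ^ k ≤ k ^ k * N.choose k := by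
    have := N.pow_sub_le_descFactorial k
    rw [Nat.descFactorial_eq_factorial_mul_choose] at this
    exact_mod_cast this.trans (Nat.mul_le_mul_right _ k.factorial_le_pow)
  have hpow : r ^ k ≤ N.choose k * p ^ k := by
    have hk : (0 : ℝ) < k ^ k := by exact_mod_cast Nat.pow_self_pos
    refine le_of_mul_le_mul_left ?_ hk
    calc (k : ℝ) ^ k * r ^ k
      _ ≤ ((N + 1 - k : ℕ) : ℝ) ^ k * p ^ k := by
        rw [← mul_pow, ← mul_pow]
        gcongr
      _ ≤ k ^ k * (N.choose k * p ^ k) := by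
        rw [← mul_assoc]
        gcongr
  calc _ ≤ N.choose k * p ^ k * (1 - p) ^ (N - k) := by gcongr
    _ ≤ _ := single_le_sum (f := fun j => N.choose j * p ^ j * (1 - p) ^ (N - j))
      (fun j _ => by positivity) (mem_range.2 k.lt_succ_self)

namespace NearThreshold

lemma exp_neg_le_one_sub_pow {n : ℕ} (h : NearThreshold n p L) :
    Real.exp (-(1.02 * L + 0.1)) ≤ (1 - p) ^ n := by
  have hp := h.pos
  have hp1 := h.le_hundredth
  have h1p : 0 < 1 - p := by linarith
  have hlog : -(p + 2 * p ^ 2) ≤ Real.log (1 - p) := by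
    refine le_trans ?_ (Real.one_sub_inv_le_log_of_pos h1p)
    have : (1 - p)⁻¹ ≤ 1 + p + 2 * p ^ 2 := by
      rw [inv_le_iff_one_le_mul₀ h1p]
      nlinarith
    linarith
  have hmean : n * p * p ≤ 1.02 * L * p := mul_le_mul_of_nonneg_right h.mean_le hp.le
  calc Real.exp (-(1.02 * L + 0.1))
    _ ≤ Real.exp (n * Real.log (1 - p)) := by
      refine Real.exp_le_exp.2 (le_trans ?_ (mul_le_mul_of_nonneg_left hlog n.cast_nonneg))
      linarith [h.mean_le, h.mul_log_le]
    _ = (1 - p) ^ n := by rw [Real.exp_nat_mul, Real.exp_log h1p]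

lemma exp_le_mul_binomialCDF {n : ℕ} (h : NearThreshold n p L) :
    Real.exp (0.01 * L - 4) ≤ n * binomialCDF p (n - 1) ⌊0.01 * L⌋₊ := by
  have hp := h.pos
  have hL := h.le_log
  have hp1 := h.le_hundredth
  set k := ⌊0.01 * L⌋₊
  have hk : (k : ℝ) ≤ 0.01 * L := Nat.floor_le (by linarith)
  have hk' : 0.01 * L < k + 1 := Nat.lt_floor_add_one _
  have hkn : k ≤ n := by
    have : (k : ℝ) ≤ n := by linarith [h.log_le]
    exact_mod_cast this
  have hn : 1 ≤ n := by exact_mod_cast (by linarith [h.le_card] : (1 : ℝ) ≤ n)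
  have hexp : Real.exp 3 ≤ 27 := calc
    Real.exp 3 = Real.exp 1 ^ 3 := by rw [← Real.exp_nat_mul]; norm_num
    _ ≤ 3 ^ 3 := by gcongr; linarith [Real.exp_one_lt_d9]
    _ = 27 := by norm_num
  have hratio : k * Real.exp 3 ≤ (n - 1 + 1 - k : ℕ) * p := by
    rw [Nat.sub_add_cancel hn, Nat.cast_sub hkn]
    nlinarith [h.le_mean]
  calc Real.exp (0.01 * L - 4)
    _ ≤ Real.exp (L + (k * 3 + -(1.02 * L + 0.1))) := Real.exp_le_exp.2 (by linarith)
    _ = n * (Real.exp 3 ^ k * Real.exp (-(1.02 * L + 0.1))) := by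
      rw [Real.exp_add, Real.exp_add, h.exp_eq, Real.exp_nat_mul]
    _ ≤ n * (Real.exp 3 ^ k * (1 - p) ^ (n - 1 - k)) := by
      gcongr
      exact h.exp_neg_le_one_sub_pow.trans
        (pow_le_pow_of_le_one (by linarith) (by linarith) (by omega))
    _ ≤ _ := by
      gcongr
      exact pow_mul_pow_le_binomialCDF hp.le h.le_one (Real.exp_pos 3).le hratio

lemma graphProb_not_exists_degree_le_le {V : Type*} [Fintype V]
    (h : NearThreshold (Fintype.card V) p L) :
    graphProb p (fun G : SimpleGraph V => ¬ ∃ v, (G.degree v : ℝ) ≤ 0.01 * L) ≤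
      Real.exp (-(0.01 * L - 4)) + 0.1 / L := by
  have hp := h.pos
  have hp1 := h.le_hundredth
  have hL : 0 < L := by linarith [h.le_log]
  have h1p : 0 < 1 - p := by linarith
  have hcard : 2 ≤ Fintype.card V := by
    exact_mod_cast (by linarith [h.le_card] : (2 : ℝ) ≤ Fintype.card V)
  have : Nonempty V := Fintype.card_pos_iff.1 (by omega)
  have hlower := h.exp_le_mul_binomialCDF
  simp only [← Nat.le_floor_iff (mul_nonneg (by norm_num : (0 : ℝ) ≤ 0.01) hL.le)]
  set n := Fintype.card V
  set k := ⌊0.01 * L⌋₊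
  have hpos : 0 < binomialCDF p (n - 1) k :=
    pos_of_mul_pos_right ((Real.exp_pos _).trans_le hlower) n.cast_nonneg
  have hratio : binomialCDF p (n - 2) k ≤ (1 - p)⁻¹ * binomialCDF p (n - 1) k := by
    rw [inv_mul_eq_div, le_div_iff₀ h1p, show n - 1 = n - 2 + 1 by omega]
    exact binomialCDF_mul_le hp.le h.le_one _ _
  refine (graphProb_not_exists_le (C := fun v G => G.degree v ≤ k) (c := (1 - p)⁻¹ ^ 2) hp.le
    h.le_one hpos (by positivity) (graphProb_degree_le p k) fun u v huv =>
      (graphProb_degree_le_and_degree_le hp.le h.le_one k huv).trans ?_).trans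
    (add_le_add ?_ ?_)
  · rw [← mul_pow]
    exact pow_le_pow_left₀ (binomialCDF_nonneg hp.le h.le_one _ _) hratio 2
  · rw [Real.exp_neg, one_div]
    exact inv_anti₀ (Real.exp_pos _) hlower
  · have hinv : (1 - p)⁻¹ ≤ 1 + 1.1 * p := by
      rw [inv_le_iff_one_le_mul₀ h1p]
      nlinarith
    have hsq : (1 - p)⁻¹ ^ 2 ≤ (1 + 1.1 * p) ^ 2 := by gcongr
    rw [le_div_iff₀ hL]
    nlinarith [h.mul_log_le]

end NearThreshold

end MinDegree

/-! ### Asymptotics -/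

lemma tendsto_pow_mul_exp_neg_mul (k : ℕ) {c : ℝ} (hc : 0 < c) (C : ℝ) :
    Tendsto (fun x : ℝ => C * (x ^ k * Real.exp (-(c * x)))) atTop (nhds 0) := by
  have := ((Real.tendsto_pow_mul_exp_neg_atTop_nhds_zero k).comp
    (tendsto_id.const_mul_atTop hc)).const_mul (C * (c ^ k)⁻¹)
  rw [mul_zero] at this
  refine this.congr fun x => ?_
  simp only [Function.comp_apply, id, mul_pow]
  field_simp

lemma tendsto_log_natCast : Tendsto (fun n : ℕ => Real.log n) atTop atTop :=
  Real.tendsto_log_atTop.comp tendsto_natCast_atTop_atTop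

section HighProbability

variable {p : ℕ → ℝ} {A B : ∀ n : ℕ, SimpleGraph (Fin n) → Prop}

lemma whp_iff_tendsto_graphProb_not :
    WHP p A ↔ Tendsto (fun n => graphProb (p n) (fun G => ¬ A n G)) atTop (nhds 0) := by
  simp only [WHP, gnpProb_eq_graphProb, graphProb_not]
  constructor <;> intro h <;> simpa using h.const_sub 1

lemma whp_of_graphProb_not_le (hp : ∀ᶠ n in atTop, 0 ≤ p n ∧ p n ≤ 1) {b : ℕ → ℝ}
    (hb : Tendsto b atTop (nhds 0))
    (h : ∀ᶠ n in atTop, graphProb (p n) (fun G => ¬ A n G) ≤ b n) : WHP p A :=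
  whp_iff_tendsto_graphProb_not.2 <| tendsto_of_tendsto_of_tendsto_of_le_of_le'
    tendsto_const_nhds hb (hp.mono fun _ hn => graphProb_nonneg hn.1 hn.2 _) h

lemma WHP.mono (hA : WHP p A) (hp : ∀ᶠ n in atTop, 0 ≤ p n ∧ p n ≤ 1)
    (h : ∀ᶠ n in atTop, ∀ G, A n G → B n G) : WHP p B := by
  refine whp_of_graphProb_not_le hp (whp_iff_tendsto_graphProb_not.1 hA) ?_
  filter_upwards [hp, h] with n hpn hn
  exact graphProb_mono hpn.1 hpn.2 fun G => mt (hn G)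

lemma WHP.and (hA : WHP p A) (hp : ∀ᶠ n in atTop, 0 ≤ p n ∧ p n ≤ 1) (hB : WHP p B) :
    WHP p (fun n G => A n G ∧ B n G) := by
  have hsum := (whp_iff_tendsto_graphProb_not.1 hA).add (whp_iff_tendsto_graphProb_not.1 hB)
  rw [add_zero] at hsum
  refine whp_of_graphProb_not_le hp hsum (hp.mono fun n hpn => ?_)
  refine (graphProb_le_sum (I := univ) (C := fun i : Bool => cond i (fun G => ¬ A n G)
    fun G => ¬ B n G) hpn.1 hpn.2 (fun G hG => ?_) fun _ _ => le_rfl).trans_eq (Fintype.sum_bool _)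
  rcases not_and_or.1 hG with hA | hB
  · exact ⟨true, mem_univ _, hA⟩
  · exact ⟨false, mem_univ _, hB⟩

theorem eventually_nearThreshold
    (hlow : Tendsto (fun n : ℕ => n * p n - Real.log n - Real.log (Real.log n)) atTop atTop)
    (hhigh : ∀ n : ℕ, p n ≤ 1.02 * Real.log n / n) :
    ∀ᶠ n : ℕ in atTop, NearThreshold n (p n) (Real.log n) := by
  have hsq := ((tendsto_pow_mul_exp_neg_mul 2 one_pos 100).comp tendsto_log_natCast).eventually
    (ge_mem_nhds one_pos)
  filter_upwards [hsq, eventually_gt_atTop 0, tendsto_log_natCast.eventually_ge_atTop 1000,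
    hlow.eventually_ge_atTop 0] with n hsq hn hlog hlow
  have hn : (0 : ℝ) < n := Nat.cast_pos.2 hn
  refine ⟨Real.exp_log hn, hlog, ?_, ?_, ?_⟩
  · linarith [Real.log_nonneg (by linarith : 1 ≤ Real.log n)]
  · rw [mul_comm]
    exact (le_div_iff₀ hn).1 (hhigh n)
  · rwa [Function.comp_apply, one_mul, Real.exp_neg, Real.exp_log hn, ← div_eq_mul_inv,
      ← mul_div_assoc, div_le_one hn] at hsq

lemma whp_of_nearThreshold (hp : ∀ᶠ n : ℕ in atTop, NearThreshold n (p n) (Real.log n))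
    {b : ℝ → ℝ} (hb : Tendsto b atTop (nhds 0))
    (h : ∀ᶠ n : ℕ in atTop, NearThreshold (Fintype.card (Fin n)) (p n) (Real.log n) →
      graphProb (p n) (fun G => ¬ A n G) ≤ b (Real.log n)) : WHP p A := by
  refine whp_of_graphProb_not_le (hp.mono fun _ hn => ⟨hn.pos.le, hn.le_one⟩)
    (hb.comp tendsto_log_natCast) ?_
  filter_upwards [hp, h] with n hn hA
  exact hA (by rwa [Fintype.card_fin])

lemma whp_two_le_degree (hp : ∀ᶠ n : ℕ in atTop, NearThreshold n (p n) (Real.log n))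
    (hlow : Tendsto (fun n : ℕ => n * p n - Real.log n - Real.log (Real.log n)) atTop atTop) :
    WHP p (fun _ G => ∀ v, 2 ≤ G.degree v) := by
  have hb := (Real.tendsto_exp_neg_atTop_nhds_zero.comp hlow).const_mul (Real.exp 3)
  rw [mul_zero] at hb
  refine whp_of_graphProb_not_le (hp.mono fun _ hn => ⟨hn.pos.le, hn.le_one⟩) hb ?_
  filter_upwards [hp] with n hn
  have hn' : NearThreshold (Fintype.card (Fin n)) (p n) (Real.log n) := by rwa [Fintype.card_fin]
  refine hn'.graphProb_not_two_le_degree_le.trans_eq ?_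
  rw [Function.comp_apply, ← Real.exp_add, Fintype.card_fin]
  ring_nf

lemma whp_exists_degree_le (hp : ∀ᶠ n : ℕ in atTop, NearThreshold n (p n) (Real.log n)) :
    WHP p (fun n G => ∃ v, (G.degree v : ℝ) ≤ 0.01 * Real.log n) := by
  refine whp_of_nearThreshold hp (b := fun L => Real.exp (-(0.01 * L - 4)) + 0.1 / L) ?_
    (Eventually.of_forall fun n h => h.graphProb_not_exists_degree_le_le)
  have := (tendsto_pow_mul_exp_neg_mul 0 (by norm_num : (0 : ℝ) < 0.01) (Real.exp 4)).add
    ((tendsto_id (x := atTop)).const_div_atTop (0.1 : ℝ))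
  rw [add_zero] at this
  refine this.congr fun x => ?_
  rw [pow_zero, one_mul, ← Real.exp_add, id]
  ring_nf

theorem whp_isTypical (hp : ∀ᶠ n : ℕ in atTop, NearThreshold n (p n) (Real.log n))
    (hlow : Tendsto (fun n : ℕ => n * p n - Real.log n - Real.log (Real.log n)) atTop atTop) :
    WHP p (fun n G => IsTypical G (Real.log n) (Real.exp (-56160))) := by
  have hp01 := hp.mono fun _ hn => And.intro hn.pos.le hn.le_one
  have hsmall : WHP p (fun n G => SmallSetsSparse G (Real.log n) (Real.exp (-56160))) :=
    whp_of_nearThreshold hp (b := fun L => Real.exp (-L) * 3)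
      ((tendsto_pow_mul_exp_neg_mul 0 one_pos 3).congr fun x => by ring_nf)
      (Eventually.of_forall fun n h => h.graphProb_not_smallSetsSparse_le)
  have hfive : WHP p (fun _ G => FiveSetsSparse G) :=
    whp_of_nearThreshold hp (b := fun L => Real.exp 10 * (2 * L) ^ 6 * Real.exp (-L) * 3)
      ((tendsto_pow_mul_exp_neg_mul 6 one_pos (Real.exp 10 * 2 ^ 6 * 3)).congr fun x => by ring_nf)
      (Eventually.of_forall fun n h => h.graphProb_not_fiveSetsSparse_le)
  have hlowDegree : WHP p (fun n G => LowDegreesScattered G (Real.log n)) :=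
    whp_of_nearThreshold hp
      (b := fun L => 25 * (Real.exp 20 * (2 * L) ^ 4 * Real.exp (-(0.3 * L))) * 3)
      ((tendsto_pow_mul_exp_neg_mul 4 (by norm_num : (0 : ℝ) < 0.3)
      (25 * Real.exp 20 * 2 ^ 4 * 3)).congr fun x => by ring_nf)
      (Eventually.of_forall fun n h => h.graphProb_not_lowDegreesScattered_le)
  have hlarge : WHP p (fun n G => LargePairsDense G (Real.log n) (Real.exp (-56160))) :=
    whp_of_nearThreshold hp Real.tendsto_exp_neg_atTop_nhds_zero <|
      (tendsto_log_natCast.eventually_ge_atTop _).mono fun n hn h =>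
        h.graphProb_not_largePairsDense_le (Real.exp_pos _) hn
  have hexp : Tendsto (fun x : ℝ => Real.exp (-(0.1 * x))) atTop (nhds 0) :=
    (tendsto_pow_mul_exp_neg_mul 0 (by norm_num : (0 : ℝ) < 0.1) 1).congr fun x => by ring_nf
  have hedges : WHP p (fun n G => (#G.edgeFinset : ℝ) ≤ Fintype.card (Fin n) * Real.log n) :=
    whp_of_nearThreshold hp hexp
      (Eventually.of_forall fun n h => h.graphProb_card_edgeFinset_gt_le)
  have hbooster : WHP p (fun n G => BoosterRich G (Real.log n)) :=
    whp_of_nearThreshold hp hexp (Eventually.of_forall fun n h => h.graphProb_not_boosterRich_le)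
  refine ((whp_two_le_degree hp hlow).and hp01 <| (whp_exists_degree_le hp).and hp01 <|
    hsmall.and hp01 <| hfive.and hp01 <| hlowDegree.and hp01 <| hlarge.and hp01 <|
    hedges.and hp01 hbooster).mono hp01 (Eventually.of_forall fun n G => ?_)
  rintro ⟨h₁, h₂, h₃, h₄, h₅, h₆, h₇, h₈⟩
  exact ⟨h₁, h₂, h₃, h₄, h₅, h₆, h₇, h₈⟩

end HighProbability

/-- Theorem 2: for `(ln n + ln ln n + ω(1))/n ≤ p ≤ 1.02 ln n / n`, w.h.p.
`r_ℓ(G, Hamiltonicity) = δ(G) - 1`. -/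
theorem stmt1 (p : ℕ → ℝ) (hp0 : ∀ n, 0 ≤ p n)
    (hlow : Tendsto (fun n : ℕ => n * p n - Real.log n - Real.log (Real.log n)) atTop atTop)
    (hhigh : ∀ n : ℕ, p n ≤ 1.02 * Real.log n / n) :
    WHP p (fun n G => ∀ hn : 0 < n,
      haveI : Nonempty (Fin n) := ⟨⟨0, hn⟩⟩
      ((∀ H : SimpleGraph (Fin n), H ≤ G → H.maxDegree ≤ G.minDegree - 2 →
          (G \ H).IsHamiltonian) ∧
        (∃ H : SimpleGraph (Fin n), H ≤ G ∧ H.maxDegree = G.minDegree - 1 ∧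
          ¬ (G \ H).IsHamiltonian))) := by
  have hp := eventually_nearThreshold hlow hhigh
  have hσ : Real.exp (-56160) ≤ 1 := Real.exp_le_one_iff.2 (by norm_num)
  refine (whp_isTypical hp hlow).mono (hp.mono fun _ hn => ⟨hn.pos.le, hn.le_one⟩) ?_
  filter_upwards [hp, tendsto_log_natCast.eventually_ge_atTop
    (20000 + 320000 / Real.exp (-56160))] with n hn hL G hG hpos
  have : Nonempty (Fin n) := ⟨⟨0, hpos⟩⟩
  have hcard : 12 ≤ Fintype.card (Fin n) := by
    rw [Fintype.card_fin]
    exact_mod_cast (by linarith [hn.le_card] : (12 : ℝ) ≤ n)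
  exact hG.local_resilience (Real.exp_pos _) hσ hL hcard
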